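/- arXiv:2409.15258 — 7 statements merged into one kernel-verified Lean document; each statement's English description precedes it below -/
import Mathlib

section
/- Let r ≥ 4 and let G be a rainbow K_r-saturated graph. Then for any two vertices u, v of G with uv not an edge of G, at least one of the following holds: (1) u and v have at least r − 1 common neighbors, or (2) deg(u) + deg(v) ≥ r(r−1)/2 − 1. -/
open SimpleGraph

/-- A proper edge-coloring of `G`: distinct edges sharing a vertex get distinct colors. -/
def IsProperEdgeColoring {V : Type} (G : SimpleGraph V) (c : Sym2 V → ℕ) : Prop :=
  ∀ e₁ ∈ G.edgeSet, ∀ e₂ ∈ G.edgeSet, e₁ ≠ e₂ → (∃ v, v ∈ e₁ ∧ v ∈ e₂) → c e₁ ≠ c e₂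

/-- `G` contains a rainbow copy of `H` under the edge-coloring `c`. -/
def HasRainbowCopy {V W : Type} (G : SimpleGraph V) (H : SimpleGraph W)
    (c : Sym2 V → ℕ) : Prop :=
  ∃ f : W → V, Function.Injective f ∧ (∀ a b, H.Adj a b → G.Adj (f a) (f b)) ∧
    ∀ e₁ ∈ H.edgeSet, ∀ e₂ ∈ H.edgeSet, e₁ ≠ e₂ → c (Sym2.map f e₁) ≠ c (Sym2.map f e₂)

/-- `G` is (properly) rainbow `H`-saturated. -/
def IsRainbowSat {V W : Type} (G : SimpleGraph V) (H : SimpleGraph W) : Prop :=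
  (∃ c : Sym2 V → ℕ, IsProperEdgeColoring G c ∧ ¬ HasRainbowCopy G H c) ∧
  ∀ u v : V, u ≠ v → ¬ G.Adj u v →
    ∀ c : Sym2 V → ℕ,
      IsProperEdgeColoring (G ⊔ SimpleGraph.fromEdgeSet {s(u, v)}) c →
      HasRainbowCopy (G ⊔ SimpleGraph.fromEdgeSet {s(u, v)}) H c

/-- For each color not appearing at `u` or `v` we get a vertex set of a rainbow clique. -/
lemma rainbow_aux {V : Type} [DecidableEq V] (r : ℕ) (G : SimpleGraph V) (u v : V)
    (hsat : ∀ c : Sym2 V → ℕ,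
      IsProperEdgeColoring (G ⊔ SimpleGraph.fromEdgeSet {s(u, v)}) c →
      HasRainbowCopy (G ⊔ SimpleGraph.fromEdgeSet {s(u, v)}) (⊤ : SimpleGraph (Fin r)) c)
    (c : Sym2 V → ℕ) (hc : IsProperEdgeColoring G c)
    (hno : ¬ HasRainbowCopy G (⊤ : SimpleGraph (Fin r)) c)
    (k : ℕ) (hku : ∀ w, G.Adj u w → c s(u, w) ≠ k) (hkv : ∀ w, G.Adj v w → c s(v, w) ≠ k) :
    ∃ S : Finset V, S.card = r ∧ u ∈ S ∧ v ∈ S ∧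
      (∀ x ∈ S, ∀ y ∈ S, x ≠ y → s(x, y) ≠ s(u, v) → G.Adj x y) ∧
      ∀ x ∈ S, ∀ y ∈ S, x ≠ y → ∀ z ∈ S, ∀ w ∈ S, z ≠ w → s(x, y) ≠ s(z, w) →
        Function.update c s(u, v) k s(x, y) ≠ Function.update c s(u, v) k s(z, w) := by
  have key : ∀ e ∈ G.edgeSet, (∃ x, x ∈ e ∧ x ∈ s(u, v)) → c e ≠ k := by
    rintro e he ⟨x, hx, hx'⟩
    obtain ⟨y, rfl⟩ := Sym2.mem_iff_exists.1 hx
    rcases Sym2.mem_iff.1 hx' with rfl | rfl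
    · exact hku _ he
    · exact hkv _ he
  have hprop : IsProperEdgeColoring (G ⊔ SimpleGraph.fromEdgeSet {s(u, v)})
      (Function.update c s(u, v) k) := by
    intro e₁ h₁ e₂ h₂ hn hx
    have m : ∀ e ∈ (G ⊔ SimpleGraph.fromEdgeSet {s(u, v)}).edgeSet,
        e ≠ s(u, v) → e ∈ G.edgeSet := by
      intro e he hne
      rw [SimpleGraph.edgeSet_sup, SimpleGraph.edgeSet_fromEdgeSet] at he
      rcases he with he | he
      · exact he
      · exact absurd he.1 hne
    by_cases a : e₁ = s(u, v)
    · subst a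
      have b : e₂ ≠ s(u, v) := hn.symm
      rw [Function.update_self, Function.update_of_ne b]
      obtain ⟨x, h, h'⟩ := hx
      exact (key _ (m _ h₂ b) ⟨x, h', h⟩).symm
    · by_cases b : e₂ = s(u, v)
      · subst b
        rw [Function.update_self, Function.update_of_ne a]
        exact key _ (m _ h₁ a) hx
      · rw [Function.update_of_ne b, Function.update_of_ne a]
        exact hc _ (m _ h₁ a) _ (m _ h₂ b) hn hx
  obtain ⟨f, hf, hadj, hrain⟩ := hsat _ hprop
  have hadj' : ∀ a b, a ≠ b → s(f a, f b) ≠ s(u, v) → G.Adj (f a) (f b) := by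
    intro a b hab hs
    rcases hadj a b hab with h | h
    · exact h
    · rw [SimpleGraph.fromEdgeSet_adj] at h
      exact absurd h.1 hs
  have hex : ∃ a b, a ≠ b ∧ s(f a, f b) = s(u, v) := by
    by_contra! hcon
    apply hno
    refine ⟨f, hf, fun a b hab => hadj' a b hab (hcon a b hab), ?_⟩
    intro e₁ h₁ e₂ h₂ hn
    have := hrain e₁ h₁ e₂ h₂ hn
    have q : ∀ e ∈ (⊤ : SimpleGraph (Fin r)).edgeSet, Sym2.map f e ≠ s(u, v) := by
      intro e
      induction e with
      | _ a b => intro he; exact hcon a b he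
    rwa [Function.update_of_ne (q _ h₁), Function.update_of_ne (q _ h₂)] at this
  refine ⟨Finset.univ.image f, ?_, ?_, ?_, ?_, ?_⟩
  · rw [Finset.card_image_of_injective _ hf]; simp
  · obtain ⟨a, b, -, h⟩ := hex
    rcases Sym2.eq_iff.1 h with h | h
    · rw [← h.1]; simp
    · rw [← h.2]; simp
  · obtain ⟨a, b, -, h⟩ := hex
    rcases Sym2.eq_iff.1 h with h | h
    · rw [← h.2]; simp
    · rw [← h.1]; simp
  · intro x hx y hy hxy hs
    simp only [Finset.mem_image, Finset.mem_univ, true_and] at hx hy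
    obtain ⟨a, rfl⟩ := hx
    obtain ⟨b, rfl⟩ := hy
    exact hadj' a b (fun h => hxy (by rw [h])) hs
  · intro x hx y hy hxy z hz w hw hzw hs
    simp only [Finset.mem_image, Finset.mem_univ, true_and] at hx hy hz hw
    obtain ⟨a, rfl⟩ := hx
    obtain ⟨b, rfl⟩ := hy
    obtain ⟨d, rfl⟩ := hz
    obtain ⟨e, rfl⟩ := hw
    refine hrain s(a, b) (fun h => hxy (congrArg f h)) s(d, e) (fun h => hzw (congrArg f h)) ?_
    intro h
    apply hs
    have := congrArg (Sym2.map f) h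
    simpa using this

/-- If `G` is rainbow `K_r`-saturated (`r ≥ 4`) and `u v` is a non-edge,
then `u, v` have at least `r - 1` common neighbors, or
`deg u + deg v ≥ r(r-1)/2 - 1`. -/
theorem stmt_0 {V : Type} [Fintype V] (r : ℕ) (hr : 4 ≤ r) (G : SimpleGraph V)
    (hsat : IsRainbowSat G (⊤ : SimpleGraph (Fin r)))
    (u v : V) (huv : u ≠ v) (hne : ¬ G.Adj u v) :
    r - 1 ≤ (G.neighborSet u ∩ G.neighborSet v).ncard ∨
    r * (r - 1) / 2 - 1 ≤ (G.neighborSet u).ncard + (G.neighborSet v).ncard := by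
  classical
  obtain ⟨⟨c, hc, hno⟩, hs⟩ := hsat
  have aux := rainbow_aux r G u v (hs u v huv hne) c hc hno
  by_contra! hcon
  obtain ⟨hcom, hdeg⟩ := hcon
  set C : Finset V := (G.neighborSet u ∩ G.neighborSet v).toFinset with hC
  rw [Set.ncard_eq_toFinset_card', ← hC] at hcom
  have huC : u ∉ C := by simp [hC]
  have hvC : v ∉ C := by simp [hC]
  have hS : ∀ S : Finset V, S.card = r → u ∈ S → v ∈ S →
      (∀ x ∈ S, ∀ y ∈ S, x ≠ y → s(x, y) ≠ s(u, v) → G.Adj x y) →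
      S = insert u (insert v C) := by
    intro S h1 h2 h3 h4
    apply Finset.eq_of_subset_of_card_le
    · intro x hx
      by_cases hxu : x = u
      · simp [hxu]
      by_cases hxv : x = v
      · simp [hxv]
      have e1 : G.Adj u x := h4 u h2 x hx (Ne.symm hxu) (by
        intro h; rcases Sym2.eq_iff.1 h with h | h
        · exact hxv h.2
        · exact huv h.1)
      have e2 : G.Adj v x := h4 v h3 x hx (Ne.symm hxv) (by
        intro h; rcases Sym2.eq_iff.1 h with h | h
        · exact huv h.1.symm
        · exact hxu h.2)
      simp [hC, e1, e2]
    · have := Finset.card_insert_le u (insert v C)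
      have := Finset.card_insert_le v C
      omega
  set B : Finset ℕ := (G.neighborSet u).toFinset.image (fun w => c s(u, w)) ∪
    (G.neighborSet v).toFinset.image (fun w => c s(v, w)) with hB
  have hBcard : B.card ≤ (G.neighborSet u).ncard + (G.neighborSet v).ncard := by
    rw [Set.ncard_eq_toFinset_card', Set.ncard_eq_toFinset_card']
    exact (Finset.card_union_le _ _).trans (add_le_add Finset.card_image_le Finset.card_image_le)
  have aux' : ∀ k, k ∉ B → _ := fun k hk => aux k
    (fun w hw h => hk (by
      rw [hB]
      exact Finset.mem_union_left _ (Finset.mem_image.2 ⟨w, by simpa using hw, h⟩)))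
    (fun w hw h => hk (by
      rw [hB]
      exact Finset.mem_union_right _ (Finset.mem_image.2 ⟨w, by simpa using hw, h⟩)))
  obtain ⟨k₀, hk₀⟩ := Infinite.exists_notMem_finset B
  obtain ⟨S, h1, h2, h3, h4, h5⟩ := aux' k₀ hk₀
  have hSe := hS S h1 h2 h3 h4
  set E : Finset (Sym2 V) := S.offDiag.image Sym2.mk.uncurry with hE
  have hEcard : E.card = r.choose 2 := by rw [hE, Sym2.card_image_offDiag, h1]
  have hEm : ∀ e ∈ E, ∃ x ∈ S, ∃ y ∈ S, x ≠ y ∧ e = s(x, y) := by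
    intro e he
    rw [hE] at he
    obtain ⟨⟨x, y⟩, hp, rfl⟩ := Finset.mem_image.1 he
    rw [Finset.mem_offDiag] at hp
    exact ⟨x, hp.1, y, hp.2.1, hp.2.2, rfl⟩
  have hinj : Set.InjOn c (E.erase s(u, v) : Finset (Sym2 V)) := by
    intro e he e' he' hee
    rw [Finset.mem_coe, Finset.mem_erase] at he he'
    obtain ⟨x, hx, y, hy, hxy, rfl⟩ := hEm e he.2
    obtain ⟨z, hz, w, hw, hzw, rfl⟩ := hEm e' he'.2
    by_contra hn
    have := h5 x hx y hy hxy z hz w hw hzw hn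
    rw [Function.update_of_ne he.1, Function.update_of_ne he'.1] at this
    exact this hee
  have hsub : (E.erase s(u, v)).image c ⊆ B := by
    intro k hk
    by_contra hkB
    obtain ⟨e, he, rfl⟩ := Finset.mem_image.1 hk
    rw [Finset.mem_erase] at he
    obtain ⟨x, hx, y, hy, hxy, rfl⟩ := hEm e he.2
    obtain ⟨T, t1, t2, t3, t4, t5⟩ := aux' _ hkB
    have hTS : T = S := (hS T t1 t2 t3 t4).trans hSe.symm
    rw [hTS] at t5
    have := t5 x hx y hy hxy u h2 v h3 huv he.1
    rw [Function.update_of_ne he.1, Function.update_self] at this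
    exact this rfl
  have hfin := Finset.card_le_card hsub
  rw [Finset.card_image_of_injOn hinj] at hfin
  have := Finset.pred_card_le_card_erase (s := E) (a := s(u, v))
  rw [hEcard, Nat.choose_two_right] at this
  omega
end

section
/- Let r ≥ 4 and t ≥ r − 1. If G is an n-vertex rainbow K_r-saturated graph with minimum degree exactly t, then the number of edges of G satisfies e(G) ≥ (r − 2)(n − t) + (t − (r − 2))(n − t − 1)/2 + (r − 2)(r − 3)/2. -/
open SimpleGraph

theorem aux_clique {V : Type} [Fintype V] (r : ℕ) (G : SimpleGraph V)
    (hsat : IsRainbowSat G (⊤ : SimpleGraph (Fin r))) (u v : V) (huv : u ≠ v)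
    (hadj : ¬ G.Adj u v) :
    ∃ S : Finset V, S.card = r - 2 ∧ (∀ x ∈ S, G.Adj u x ∧ G.Adj v x) ∧
      (∀ x ∈ S, ∀ y ∈ S, x ≠ y → G.Adj x y) := by
  classical
  obtain ⟨⟨c, hc, hno⟩, hs⟩ := hsat
  set M : ℕ := (Finset.univ.sup c) + 1 with hM
  have hlt : ∀ e, c e < M := fun e => Nat.lt_succ_of_le (Finset.le_sup (Finset.mem_univ e))
  have hedge : ∀ e, e ∈ (G ⊔ SimpleGraph.fromEdgeSet {s(u, v)}).edgeSet →
      e ∈ G.edgeSet ∨ e = s(u, v) := by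
    intro e he
    rw [SimpleGraph.edgeSet_sup, SimpleGraph.edgeSet_fromEdgeSet] at he
    rcases he with he | he
    · exact Or.inl he
    · exact Or.inr he.1
  have hprop : IsProperEdgeColoring (G ⊔ SimpleGraph.fromEdgeSet {s(u, v)})
      (fun e => if e = s(u, v) then M else c e) := by
    intro e₁ h₁ e₂ h₂ hne hv
    have l1 := hlt e₁
    have l2 := hlt e₂
    by_cases a1 : e₁ = s(u, v)
    · have a2 : e₂ ≠ s(u, v) := fun h => hne (a1.trans h.symm)
      simp only [if_pos a1, if_neg a2]
      omega
    · by_cases a2 : e₂ = s(u, v)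
      · simp only [if_neg a1, if_pos a2]
        omega
      · simp only [if_neg a1, if_neg a2]
        exact hc e₁ ((hedge e₁ h₁).resolve_right a1) e₂ ((hedge e₂ h₂).resolve_right a2) hne hv
  obtain ⟨f, hf, hfadj, hrain⟩ := hs u v huv hadj _ hprop
  have hadjG : ∀ a b : Fin r, a ≠ b → s(f a, f b) ≠ s(u, v) → G.Adj (f a) (f b) := by
    intro a b hab hne
    have h1 := hfadj a b hab
    exact (hedge s(f a, f b) h1).resolve_right hne
  have hex : ∃ a b : Fin r, f a = u ∧ f b = v := by
    by_contra hcon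
    push Not at hcon
    have hne : ∀ a b : Fin r, s(f a, f b) ≠ s(u, v) := by
      intro a b h
      rcases Sym2.eq_iff.1 h with ⟨h1, h2⟩ | ⟨h1, h2⟩
      · exact hcon a b h1 h2
      · exact hcon b a h2 h1
    apply hno
    refine ⟨f, hf, fun a b hab => hadjG a b hab (hne a b), ?_⟩
    intro e₁ h₁ e₂ h₂ he
    have h := hrain e₁ h₁ e₂ h₂ he
    have n1 : Sym2.map f e₁ ≠ s(u, v) := by
      induction e₁ using Sym2.ind with | _ a b => exact hne a b
    have n2 : Sym2.map f e₂ ≠ s(u, v) := by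
      induction e₂ using Sym2.ind with | _ a b => exact hne a b
    simpa only [if_neg n1, if_neg n2] using h
  obtain ⟨a, b, rfl, rfl⟩ := hex
  have hab : a ≠ b := fun h => huv (by rw [h])
  refine ⟨(Finset.univ \ {a, b}).image f, ?_, ?_, ?_⟩
  · rw [Finset.card_image_of_injective _ hf, Finset.card_sdiff_of_subset (Finset.subset_univ _),
      Finset.card_pair hab]
    simp
  · intro x hx
    obtain ⟨k, hk, rfl⟩ := Finset.mem_image.1 hx
    have hk' : k ≠ a ∧ k ≠ b := by simpa using hk
    have fa := hf.ne hk'.1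
    have fb := hf.ne hk'.2
    refine ⟨hadjG a k hk'.1.symm ?_, hadjG b k hk'.2.symm ?_⟩
    · intro h
      rcases Sym2.eq_iff.1 h with ⟨h1, h2⟩ | ⟨h1, h2⟩
      · exact fb h2
      · exact fa h2
    · intro h
      rcases Sym2.eq_iff.1 h with ⟨h1, h2⟩ | ⟨h1, h2⟩
      · exact fb h2
      · exact fa h2
  · intro x hx y hy hxy
    obtain ⟨k, hk, rfl⟩ := Finset.mem_image.1 hx
    obtain ⟨l, hl, rfl⟩ := Finset.mem_image.1 hy
    have hk' : k ≠ a ∧ k ≠ b := by simpa using hk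
    have fa := hf.ne hk'.1
    have fb := hf.ne hk'.2
    refine hadjG k l (fun h => hxy (by rw [h])) ?_
    intro h
    rcases Sym2.eq_iff.1 h with ⟨h1, h2⟩ | ⟨h1, h2⟩
    · exact fa h1
    · exact fb h1

/-- Edge lower bound for rainbow `K_r`-saturated graphs with minimum
degree exactly `t ≥ r - 1`. -/
theorem stmt_2 {V : Type} [Fintype V] (r t n : ℕ) (hr : 4 ≤ r) (ht : r - 1 ≤ t)
    (hn : Fintype.card V = n) (G : SimpleGraph V)
    (hsat : IsRainbowSat G (⊤ : SimpleGraph (Fin r)))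
    (hmin : ∀ v : V, t ≤ (G.neighborSet v).ncard)
    (hexact : ∃ v : V, (G.neighborSet v).ncard = t) :
    ((r : ℝ) - 2) * ((n : ℝ) - t) + ((t : ℝ) - ((r : ℝ) - 2)) * ((n : ℝ) - t - 1) / 2
        + ((r : ℝ) - 2) * ((r : ℝ) - 3) / 2
      ≤ (G.edgeSet.ncard : ℝ) := by
  classical
  obtain ⟨v, hv⟩ := hexact
  have hdeg : ∀ x, (G.neighborSet x).ncard = G.degree x := by
    intro x
    rw [← SimpleGraph.card_neighborFinset_eq_degree, ← Set.ncard_coe_finset,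
      SimpleGraph.coe_neighborFinset]
  have hE : G.edgeSet.ncard = G.edgeFinset.card := by
    rw [← SimpleGraph.coe_edgeFinset, Set.ncard_coe_finset]
  simp only [hdeg] at hmin hv
  set N := G.neighborFinset v with hN
  have hNc : N.card = t := by rw [hN, SimpleGraph.card_neighborFinset_eq_degree, hv]
  have hvN : v ∉ N := by simp [hN]
  set W := Finset.univ \ (insert v N) with hW
  have hWc : W.card + (t + 1) = n := by
    have h1 : (insert v N).card = t + 1 := by rw [Finset.card_insert_of_notMem hvN, hNc]
    rw [← h1, hW, Finset.card_sdiff_add_card_eq_card (Finset.subset_univ _), Finset.card_univ, hn]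
  have hWmem : ∀ w, w ∈ W ↔ v ≠ w ∧ ¬ G.Adj v w := by
    intro w
    simp [hW, hN, eq_comm]
  -- common neighbours
  have hcommon : ∀ w ∈ W, r - 2 ≤ (N.filter (fun u => G.Adj w u)).card := by
    intro w hw
    obtain ⟨h1, h2⟩ := (hWmem w).1 hw
    obtain ⟨S, hS, hSa, -⟩ := aux_clique r G hsat v w h1 h2
    rw [← hS]
    apply Finset.card_le_card
    intro x hx
    simpa [hN] using hSa x hx
  have hclique : ∃ S ⊆ N, S.card = r - 2 ∧ ∀ x ∈ S, ∀ y ∈ S, x ≠ y → G.Adj x y := by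
    rcases W.eq_empty_or_nonempty with h | ⟨w, hw⟩
    · have hWn : n = t + 1 := by rw [← hWc, h]; simp
      obtain ⟨S, hSN, hS⟩ := Finset.exists_subset_card_eq (s := N) (n := r - 2) (by omega)
      refine ⟨S, hSN, hS, ?_⟩
      intro x _ y _ hxy
      have h1 := hmin x
      have h2 : G.neighborFinset x = Finset.univ.erase x := by
        apply Finset.eq_of_subset_of_card_le
        · intro z hz
          simp only [SimpleGraph.mem_neighborFinset] at hz
          simp [hz.ne']
        · rw [Finset.card_erase_of_mem (Finset.mem_univ _), Finset.card_univ,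
            SimpleGraph.card_neighborFinset_eq_degree, hn]
          omega
      rw [← SimpleGraph.mem_neighborFinset, h2]
      simp [hxy.symm]
    · obtain ⟨h1, h2⟩ := (hWmem w).1 hw
      obtain ⟨S, hS, hSa, hSc⟩ := aux_clique r G hsat v w h1 h2
      exact ⟨S, fun x hx => by simpa [hN] using (hSa x hx).1, hS, hSc⟩
  obtain ⟨S, hSN, hS, hSc⟩ := hclique
  have hsum : ∑ x, G.degree x = t + ∑ u ∈ N, G.degree u + ∑ w ∈ W, G.degree w := by
    rw [← Finset.sum_sdiff (Finset.subset_univ (insert v N)), ← hW, Finset.sum_insert hvN, hv]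
    ring
  have hdegN : ∀ u ∈ N, 1 + (N.filter (fun x => G.Adj u x)).card
      + (W.filter (fun x => G.Adj u x)).card = G.degree u := by
    intro u hu
    have hu' : G.Adj u v := by simpa [hN, G.adj_comm] using hu
    have h1 : G.neighborFinset u = Finset.univ.filter (fun x => G.Adj u x) := by
      ext; simp
    rw [← SimpleGraph.card_neighborFinset_eq_degree, h1, Finset.card_filter, Finset.card_filter,
      Finset.card_filter, ← Finset.sum_sdiff (Finset.subset_univ (insert v N)), ← hW,
      Finset.sum_insert hvN, if_pos hu']
    ring
  have hNsum : ∑ u ∈ N, G.degree u = t + ∑ u ∈ N, (N.filter (fun x => G.Adj u x)).card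
      + ∑ u ∈ N, (W.filter (fun x => G.Adj u x)).card := by
    rw [← Finset.sum_congr rfl hdegN, Finset.sum_add_distrib, Finset.sum_add_distrib]
    simp [hNc]
  have hswap : ∑ u ∈ N, (W.filter (fun x => G.Adj u x)).card
      = ∑ w ∈ W, (N.filter (fun x => G.Adj w x)).card := by
    simp only [Finset.card_filter]
    rw [Finset.sum_comm]
    simp only [G.adj_comm]
  have hA : (r - 2) * W.card ≤ ∑ w ∈ W, (N.filter (fun x => G.Adj w x)).card := by
    rw [mul_comm, ← smul_eq_mul]
    exact Finset.card_nsmul_le_sum _ _ _ hcommon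
  have hB : t * W.card ≤ ∑ w ∈ W, G.degree w := by
    rw [mul_comm, ← smul_eq_mul]
    exact Finset.card_nsmul_le_sum _ _ _ (fun w _ => hmin w)
  have hC : (r - 2) * (r - 3) ≤ ∑ u ∈ N, (N.filter (fun x => G.Adj u x)).card := by
    refine le_trans ?_ (Finset.sum_le_sum_of_subset hSN)
    rw [← hS, ← smul_eq_mul]
    refine Finset.card_nsmul_le_sum _ _ _ (fun x hx => ?_)
    have h3 : (S.erase x).card = r - 3 := by
      rw [Finset.card_erase_of_mem hx, hS]
      omega
    rw [← h3]
    apply Finset.card_le_card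
    intro y hy
    obtain ⟨hy1, hy2⟩ := Finset.mem_erase.1 hy
    exact Finset.mem_filter.2 ⟨hSN hy2, hSc x hx y hy2 hy1.symm⟩
  have htot := G.sum_degrees_eq_twice_card_edges
  have hfin : 2 * t + (r - 2) * W.card + t * W.card + (r - 2) * (r - 3)
      ≤ 2 * G.edgeFinset.card := by
    omega
  rw [hE]
  obtain ⟨k, rfl⟩ : ∃ k, r = k + 4 := ⟨r - 4, by omega⟩
  have e1 : k + 4 - 2 = k + 2 := by omega
  have e2 : k + 4 - 3 = k + 1 := by omega
  rw [e1, e2] at hfin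
  have ht' : k + 3 ≤ t := by omega
  have hfin' : 2 * (t : ℝ) + (k + 2) * W.card + t * W.card + (k + 2) * (k + 1)
      ≤ 2 * (G.edgeFinset.card : ℝ) := by exact_mod_cast hfin
  have ht'' : (k : ℝ) + 3 ≤ t := by exact_mod_cast ht'
  have hn' : (n : ℝ) = W.card + (t + 1) := by exact_mod_cast hWc.symm
  rw [hn']
  push_cast
  linarith
end

section
/- For every r ≥ 5 there exists a constant C (depending only on r) such that every n-vertex rainbow K_r-saturated graph has at least (r − 1)n − C edges. -/
open SimpleGraph

open Classical in
theorem rs_copy {V : Type} [Fintype V] {r : ℕ} {G : SimpleGraph V}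
    (hsat : ∀ u v : V, u ≠ v → ¬ G.Adj u v →
      ∀ c : Sym2 V → ℕ,
        IsProperEdgeColoring (G ⊔ SimpleGraph.fromEdgeSet {s(u, v)}) c →
        HasRainbowCopy (G ⊔ SimpleGraph.fromEdgeSet {s(u, v)}) (⊤ : SimpleGraph (Fin r)) c)
    {c : Sym2 V → ℕ} (hc : IsProperEdgeColoring G c)
    (hno : ¬ HasRainbowCopy G (⊤ : SimpleGraph (Fin r)) c)
    {u v : V} (huv : u ≠ v) (hadj : ¬ G.Adj u v) (α : ℕ)
    (hu : ∀ w, G.Adj u w → c s(u, w) ≠ α) (hv : ∀ w, G.Adj v w → c s(v, w) ≠ α) :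
    ∃ A : Finset V, A.card = r ∧ u ∈ A ∧ v ∈ A ∧
      (∀ a ∈ A, ∀ b ∈ A, a ≠ b → G.Adj a b ∨ s(a, b) = s(u, v)) ∧
      (∀ a ∈ A, ∀ b ∈ A, ∀ x ∈ A, ∀ y ∈ A, a ≠ b → x ≠ y → s(a, b) ≠ s(x, y) →
        Function.update c s(u, v) α s(a, b) ≠ Function.update c s(u, v) α s(x, y)) := by
  have key : ∀ e ∈ G.edgeSet, (∃ z, z ∈ e ∧ z ∈ s(u, v)) → c e ≠ α := by
    rintro e he ⟨z, hz, hz'⟩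
    obtain ⟨w, rfl⟩ := hz
    rw [Sym2.mem_iff] at hz'
    rcases hz' with rfl | rfl
    · exact hu w he
    · exact hv w he
  have hne : ∀ e ∈ G.edgeSet, e ≠ s(u, v) := by
    rintro e he rfl
    exact hadj he
  have hcase : ∀ e ∈ (G ⊔ SimpleGraph.fromEdgeSet {s(u, v)}).edgeSet,
      e ∈ G.edgeSet ∨ e = s(u, v) := by
    intro e he
    rw [SimpleGraph.edgeSet_sup] at he
    rcases he with he | he
    · exact Or.inl he
    · rw [SimpleGraph.edgeSet_fromEdgeSet] at he
      exact Or.inr he.1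
  have hprop : IsProperEdgeColoring (G ⊔ SimpleGraph.fromEdgeSet {s(u, v)})
      (Function.update c s(u, v) α) := by
    intro e₁ h₁ e₂ h₂ h12 hz
    rcases hcase e₁ h₁ with h1 | h1 <;> rcases hcase e₂ h₂ with h2 | h2
    · rw [Function.update_of_ne (hne _ h1), Function.update_of_ne (hne _ h2)]
      exact hc e₁ h1 e₂ h2 h12 hz
    · subst h2
      rw [Function.update_of_ne (hne _ h1), Function.update_self]
      exact key _ h1 hz
    · subst h1
      rw [Function.update_of_ne (hne _ h2), Function.update_self]
      obtain ⟨z, a, b⟩ := hz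
      exact (key _ h2 ⟨z, b, a⟩).symm
    · exact absurd (h1.trans h2.symm) h12
  obtain ⟨f, finj, fadj, frb⟩ := hsat u v huv hadj _ hprop
  have fadj' : ∀ a b, a ≠ b → G.Adj (f a) (f b) ∨ s(f a, f b) = s(u, v) := by
    intro a b hab
    exact hcase s(f a, f b) (fadj a b hab)
  have hex : ∃ a b, s(f a, f b) = s(u, v) := by
    by_contra hcon
    push Not at hcon
    apply hno
    refine ⟨f, finj, fun a b hab => (fadj' a b hab).resolve_right (hcon a b), ?_⟩
    intro e₁ h₁ e₂ h₂ h12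
    have := frb e₁ h₁ e₂ h₂ h12
    have hn : ∀ e : Sym2 (Fin r), Sym2.map f e ≠ s(u, v) := by
      intro e
      induction e with
      | _ a b => exact hcon a b
    rwa [Function.update_of_ne (hn _), Function.update_of_ne (hn _)] at this
  obtain ⟨a₀, b₀, hab₀⟩ := hex
  refine ⟨Finset.univ.image f, ?_, ?_, ?_, ?_, ?_⟩
  · rw [Finset.card_image_of_injective _ finj]; simp
  · rw [Sym2.eq_iff] at hab₀
    rcases hab₀ with ⟨h, _⟩ | ⟨_, h⟩ <;> simp [← h]
  · rw [Sym2.eq_iff] at hab₀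
    rcases hab₀ with ⟨_, h⟩ | ⟨h, _⟩ <;> simp [← h]
  · simp only [Finset.mem_image, Finset.mem_univ, true_and]
    rintro _ ⟨a, rfl⟩ _ ⟨b, rfl⟩ hab
    exact fadj' a b (fun h => hab (by rw [h]))
  · simp only [Finset.mem_image, Finset.mem_univ, true_and]
    rintro _ ⟨a, rfl⟩ _ ⟨b, rfl⟩ _ ⟨x, rfl⟩ _ ⟨y, rfl⟩ hab hxy hne'
    refine frb s(a, b) ?_ s(x, y) ?_ ?_
    · simp only [SimpleGraph.mem_edgeSet, SimpleGraph.top_adj]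
      exact fun h => hab (by rw [h])
    · simp only [SimpleGraph.mem_edgeSet, SimpleGraph.top_adj]
      exact fun h => hxy (by rw [h])
    · intro h
      exact hne' (by simpa using congrArg (Sym2.map f) h)

open Classical in
/-- The `r-2` remaining vertices of the new rainbow clique. -/
theorem rs_core {V : Type} [Fintype V] {r : ℕ} {G : SimpleGraph V}
    (hsat : ∀ u v : V, u ≠ v → ¬ G.Adj u v →
      ∀ c : Sym2 V → ℕ,
        IsProperEdgeColoring (G ⊔ SimpleGraph.fromEdgeSet {s(u, v)}) c →
        HasRainbowCopy (G ⊔ SimpleGraph.fromEdgeSet {s(u, v)}) (⊤ : SimpleGraph (Fin r)) c)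
    {c : Sym2 V → ℕ} (hc : IsProperEdgeColoring G c)
    (hno : ¬ HasRainbowCopy G (⊤ : SimpleGraph (Fin r)) c)
    {u v : V} (huv : u ≠ v) (hadj : ¬ G.Adj u v) (α : ℕ)
    (hu : ∀ w, G.Adj u w → c s(u, w) ≠ α) (hv : ∀ w, G.Adj v w → c s(v, w) ≠ α) :
    ∃ T : Finset V, T.card = r - 2 ∧ T ⊆ G.neighborFinset u ∩ G.neighborFinset v ∧
      (∀ a ∈ T, ∀ b ∈ T, a ≠ b → c s(a, b) ≠ α) ∧
      (∀ a ∈ T, ∀ b ∈ T, ∀ x ∈ T, ∀ y ∈ T, a ≠ b → x ≠ y → s(a, b) ≠ s(x, y) →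
        c s(a, b) ≠ c s(x, y)) ∧
      (∀ a ∈ T, ∀ b ∈ T, ∀ x ∈ T, a ≠ b → c s(a, b) ≠ c s(u, x)) ∧
      (∀ a ∈ T, ∀ b ∈ T, ∀ x ∈ T, a ≠ b → c s(a, b) ≠ c s(v, x)) := by
  obtain ⟨A, hA, huA, hvA, hadjA, hrb⟩ := rs_copy hsat hc hno huv hadj α hu hv
  have hT : ∀ a ∈ (A.erase u).erase v, a ∈ A ∧ a ≠ u ∧ a ≠ v := by
    intro a ha
    simp only [Finset.mem_erase] at ha
    exact ⟨ha.2.2, ha.2.1, ha.1⟩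
  have hne : ∀ a b, a ≠ u → a ≠ v → s(a, b) ≠ s(u, v) := by
    intro a b h1 h2 h
    rw [Sym2.eq_iff] at h
    rcases h with h | h
    · exact h1 h.1
    · exact h2 h.1
  refine ⟨(A.erase u).erase v, ?_, ?_, ?_, ?_, ?_, ?_⟩
  · rw [Finset.card_erase_of_mem, Finset.card_erase_of_mem huA, hA]
    · omega
    · simp [huv.symm, hvA]
  · intro a ha
    obtain ⟨h1, h2, h3⟩ := hT a ha
    simp only [Finset.mem_inter, SimpleGraph.mem_neighborFinset]
    exact ⟨((hadjA a h1 u huA h2).resolve_right (hne _ _ h2 h3)).symm,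
      ((hadjA a h1 v hvA h3).resolve_right (hne _ _ h2 h3)).symm⟩
  · intro a ha b hb hab
    obtain ⟨h1, h2, h3⟩ := hT a ha
    obtain ⟨h1', h2', h3'⟩ := hT b hb
    have := hrb a h1 b h1' u huA v hvA hab huv (hne _ _ h2 h3)
    rwa [Function.update_of_ne (hne _ _ h2 h3), Function.update_self] at this
  · intro a ha b hb x hx y hy hab hxy hh
    obtain ⟨h1, h2, h3⟩ := hT a ha
    obtain ⟨h4, h5, h6⟩ := hT x hx
    have := hrb a h1 b (hT b hb).1 x h4 y (hT y hy).1 hab hxy hh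
    rwa [Function.update_of_ne (hne _ _ h2 h3), Function.update_of_ne (hne _ _ h5 h6)] at this
  · intro a ha b hb x hx hab
    obtain ⟨h1, h2, h3⟩ := hT a ha
    obtain ⟨h1', h2', h3'⟩ := hT b hb
    obtain ⟨h4, h5, h6⟩ := hT x hx
    have hs : s(a, b) ≠ s(x, u) := by
      intro h
      rw [Sym2.eq_iff] at h
      rcases h with h | h
      · exact h2' h.2
      · exact h2 h.1
    have := hrb a h1 b h1' x h4 u huA hab h5 hs
    rw [Function.update_of_ne (hne _ _ h2 h3), Function.update_of_ne (hne _ _ h5 h6)] at this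
    rwa [Sym2.eq_swap (a := u)]
  · intro a ha b hb x hx hab
    obtain ⟨h1, h2, h3⟩ := hT a ha
    obtain ⟨h1', h2', h3'⟩ := hT b hb
    obtain ⟨h4, h5, h6⟩ := hT x hx
    have hs : s(a, b) ≠ s(x, v) := by
      intro h
      rw [Sym2.eq_iff] at h
      rcases h with h | h
      · exact h3' h.2
      · exact h3 h.1
    have := hrb a h1 b h1' x h4 v hvA hab h6 hs
    rw [Function.update_of_ne (hne _ _ h2 h3), Function.update_of_ne (hne _ _ h5 h6)] at this
    rwa [Sym2.eq_swap (a := v)]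

open Classical in
/-- Two distinct colors of edges inside `T` appearing at `z` force two extra neighbors. -/
theorem rs_deg {V : Type} [Fintype V] {r : ℕ} (hr : 5 ≤ r) {G : SimpleGraph V}
    {c : Sym2 V → ℕ} {z : V} {T : Finset V} (hT : T.card = r - 2)
    (hTz : T ⊆ G.neighborFinset z) {α β : ℕ} (hab : α ≠ β)
    (hα : ∀ x ∈ T, α ≠ c s(z, x)) (hβ : ∀ x ∈ T, β ≠ c s(z, x))
    (h1 : ∃ w, G.Adj z w ∧ c s(z, w) = α) (h2 : ∃ w, G.Adj z w ∧ c s(z, w) = β) :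
    r ≤ G.degree z := by
  obtain ⟨w, hw, rfl⟩ := h1
  obtain ⟨w', hw', rfl⟩ := h2
  have hww : w ≠ w' := by rintro rfl; exact hab rfl
  have a1 : w ∉ T := fun h => hα w h rfl
  have a2 : w' ∉ T := fun h => hβ w' h rfl
  have hsub : insert w (insert w' T) ⊆ G.neighborFinset z := by
    intro x hx
    simp only [Finset.mem_insert] at hx
    rcases hx with rfl | rfl | hx
    · simpa using hw
    · simpa using hw'
    · exact hTz hx
  have := Finset.card_le_card hsub
  rw [Finset.card_insert_of_notMem (by simp [hww, a1]), Finset.card_insert_of_notMem a2,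
    hT, SimpleGraph.card_neighborFinset_eq_degree] at this
  omega

open Classical in
theorem rs_local {V : Type} [Fintype V] {r : ℕ} (hr : 5 ≤ r) {G : SimpleGraph V}
    (hG : IsRainbowSat G (⊤ : SimpleGraph (Fin r)))
    {u v : V} (huv : u ≠ v) (hadj : ¬ G.Adj u v) (hmin : G.degree v ≤ G.degree u) :
    2 * r - 2 ≤ (G.neighborFinset u ∩ G.neighborFinset v).card + G.degree u := by
  obtain ⟨⟨c, hc, hno⟩, hsat⟩ := hG
  obtain ⟨α, hα⟩ := Infinite.exists_notMem_finset (Finset.univ.image c)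
  have hα' : ∀ e, c e ≠ α := by
    intro e he
    exact hα (by simp [← he])
  obtain ⟨T, hTc, hTs, -, hTr, hTu, hTv⟩ :=
    rs_core hsat hc hno huv hadj α (fun w _ => hα' _) (fun w _ => hα' _)
  have hle := Finset.card_le_card hTs
  have hxd : (G.neighborFinset u ∩ G.neighborFinset v).card ≤ G.degree u := by
    rw [← SimpleGraph.card_neighborFinset_eq_degree]
    exact Finset.card_le_card Finset.inter_subset_left
  by_cases hx : r - 1 ≤ (G.neighborFinset u ∩ G.neighborFinset v).card
  · omega
  have hTeq : T = G.neighborFinset u ∩ G.neighborFinset v :=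
    Finset.eq_of_subset_of_card_le hTs (by omega)
  have happ : ∀ a ∈ T, ∀ b ∈ T, a ≠ b →
      (∃ w, G.Adj u w ∧ c s(u, w) = c s(a, b)) ∨ (∃ w, G.Adj v w ∧ c s(v, w) = c s(a, b)) := by
    intro a ha b hb hab
    by_contra hcon
    push Not at hcon
    obtain ⟨T', hTc', hTs', hne, -⟩ :=
      rs_core hsat hc hno huv hadj (c s(a, b)) hcon.1 hcon.2
    have hTT : T' = T := by
      apply Finset.eq_of_subset_of_card_le
      · rw [hTeq]; exact hTs'
      · omega
    subst hTT
    exact hne a ha b hb hab rfl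
  have h3 : 2 < T.card := by omega
  obtain ⟨p, q, s, hp, hq, hs, hpq, hps, hqs⟩ := Finset.two_lt_card_iff.1 h3
  have e1 : c s(p, q) ≠ c s(p, s) := hTr p hp q hq p hp s hs hpq hps (by
    intro h; rw [Sym2.eq_iff] at h; tauto)
  have e2 : c s(p, q) ≠ c s(q, s) := hTr p hp q hq q hq s hs hpq hqs (by
    intro h; rw [Sym2.eq_iff] at h; tauto)
  have e3 : c s(p, s) ≠ c s(q, s) := hTr p hp s hs q hq s hs hps hqs (by
    intro h; rw [Sym2.eq_iff] at h; tauto)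
  have hTsu : T ⊆ G.neighborFinset u := hTs.trans Finset.inter_subset_left
  have hTsv : T ⊆ G.neighborFinset v := hTs.trans Finset.inter_subset_right
  have U1 := fun x hx => hTu p hp q hq x hx hpq
  have U2 := fun x hx => hTu p hp s hs x hx hps
  have U3 := fun x hx => hTu q hq s hs x hx hqs
  have V1 := fun x hx => hTv p hp q hq x hx hpq
  have V2 := fun x hx => hTv p hp s hs x hx hps
  have V3 := fun x hx => hTv q hq s hs x hx hqs
  have hdeg : r ≤ G.degree u := by
    rcases happ p hp q hq hpq with h1 | h1 <;> rcases happ p hp s hs hps with h2 | h2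
    · exact rs_deg hr hTc hTsu e1 U1 U2 h1 h2
    · rcases happ q hq s hs hqs with h3 | h3
      · exact rs_deg hr hTc hTsu e2 U1 U3 h1 h3
      · exact (rs_deg hr hTc hTsv e3 V2 V3 h2 h3).trans hmin
    · rcases happ q hq s hs hqs with h3 | h3
      · exact rs_deg hr hTc hTsu e3 U2 U3 h2 h3
      · exact (rs_deg hr hTc hTsv e2 V1 V3 h1 h3).trans hmin
    · exact (rs_deg hr hTc hTsv e1 V1 V2 h1 h2).trans hmin
  omega

open Classical in
theorem rs_count {V : Type} [Fintype V] (G : SimpleGraph V) (v : V) (k : ℕ)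
    (h : ∀ u, u ≠ v → ¬ G.Adj u v →
      k ≤ (G.neighborFinset u ∩ G.neighborFinset v).card + G.degree u) :
    k * (Fintype.card V) ≤ 2 * G.edgeFinset.card + k * (G.degree v + 1) := by
  set N := G.neighborFinset v with hN
  set R := (insert v N)ᶜ with hR
  have hRc : R.card + (G.degree v + 1) = Fintype.card V := by
    have : (insert v N).card = G.degree v + 1 := by
      rw [Finset.card_insert_of_notMem (by simp [hN]), hN,
        SimpleGraph.card_neighborFinset_eq_degree]
    rw [← this, add_comm]
    exact Finset.card_add_card_compl _
  have hdisj : Disjoint R N := by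
    rw [Finset.disjoint_left]
    intro a ha hb
    simp [hR, hb] at ha
  have hx : ∑ u ∈ R, (G.neighborFinset u ∩ N).card ≤ ∑ w ∈ N, G.degree w := by
    have h1 := Finset.sum_card_bipartiteAbove_eq_sum_card_bipartiteBelow (s := R) (t := N) G.Adj
    have h2 : ∀ u ∈ R, (G.neighborFinset u ∩ N).card = (N.bipartiteAbove G.Adj u).card := by
      intro u _
      congr 1
      ext w
      simp [Finset.mem_bipartiteAbove, and_comm]
    rw [Finset.sum_congr rfl h2, h1]
    apply Finset.sum_le_sum
    intro w _
    rw [← SimpleGraph.card_neighborFinset_eq_degree]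
    apply Finset.card_le_card
    intro x hx
    rw [Finset.mem_bipartiteBelow] at hx
    simpa using hx.2.symm
  have hsum : ∑ u ∈ R, G.degree u + ∑ w ∈ N, G.degree w ≤ 2 * G.edgeFinset.card := by
    rw [← Finset.sum_union hdisj, ← SimpleGraph.sum_degrees_eq_twice_card_edges]
    exact Finset.sum_le_sum_of_subset (Finset.subset_univ _)
  have hk : R.card * k ≤ ∑ u ∈ R, ((G.neighborFinset u ∩ N).card + G.degree u) := by
    rw [← smul_eq_mul]
    apply Finset.card_nsmul_le_sum
    intro u hu
    simp only [hR, Finset.mem_compl, Finset.mem_insert, not_or, hN,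
      SimpleGraph.mem_neighborFinset] at hu
    exact h u hu.1 (fun h => hu.2 h.symm)
  rw [Finset.sum_add_distrib] at hk
  rw [← hRc]
  nlinarith

/-- For every `r ≥ 5` there is a constant `C` such that every
`n`-vertex rainbow `K_r`-saturated graph has at least `(r-1)n - C` edges. -/
theorem stmt_3 (r : ℕ) (hr : 5 ≤ r) :
    ∃ C : ℝ, ∀ n : ℕ, ∀ G : SimpleGraph (Fin n),
      IsRainbowSat G (⊤ : SimpleGraph (Fin r)) →
      ((r : ℝ) - 1) * (n : ℝ) - C ≤ (G.edgeSet.ncard : ℝ) := by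
  classical
  refine ⟨((r : ℝ) - 1) * (2 * r), fun n G hG => ?_⟩
  obtain ⟨k, rfl⟩ : ∃ k, r = k + 1 := ⟨r - 1, by omega⟩
  suffices hmain : k * n ≤ G.edgeFinset.card + k * (2 * (k + 1)) by
    have he : G.edgeSet.ncard = G.edgeFinset.card := by
      rw [← SimpleGraph.coe_edgeFinset, Set.ncard_coe_finset]
    rw [he]
    have : ((k * n : ℕ) : ℝ) ≤ ((G.edgeFinset.card + k * (2 * (k + 1)) : ℕ) : ℝ) := by
      exact_mod_cast hmain
    push_cast at this ⊢
    linarith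
  rcases Nat.eq_zero_or_pos n with rfl | hn
  · simp
  have : Nonempty (Fin n) := ⟨⟨0, hn⟩⟩
  obtain ⟨v, hv⟩ := G.exists_minimal_degree_vertex
  have hmin : ∀ u, G.degree v ≤ G.degree u := fun u => hv ▸ G.minDegree_le_degree u
  by_cases hd : 2 * k ≤ G.degree v
  · have h1 : Fintype.card (Fin n) * (2 * k) ≤ ∑ u, G.degree u := by
      rw [← smul_eq_mul]
      exact Finset.card_nsmul_le_sum _ _ _ (fun u _ => hd.trans (hmin u))
    rw [SimpleGraph.sum_degrees_eq_twice_card_edges, Fintype.card_fin] at h1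
    nlinarith
  · have h1 := rs_count G v (2 * k) (fun u hu ha => by
      have := rs_local hr hG hu ha (by convert hmin u)
      convert this using 1
      omega)
    rw [Fintype.card_fin] at h1
    have h2 : 2 * k * (G.degree v + 1) ≤ 2 * k * (2 * (k + 1)) :=
      Nat.mul_le_mul_left _ (by omega)
    have h3 : 2 * k * n ≤ 2 * G.edgeFinset.card + 2 * k * (G.degree v + 1) := by
      convert h1
    nlinarith
end

section
/- For every r ≥ 3 there exist a constant C and an integer n₀ (both depending only on r) such that for all n ≥ n₀ there exists an n-vertex rainbow K_{r+1}-saturated graph with at most (r⁴/8)n + C edges. -/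
open SimpleGraph

/-- Size of the `k`-th part. -/
def partSize (k : ℕ) : ℕ := (k + 2) * (k + 1).choose 2 + 1

/-- Start of the `k`-th part. -/
def partStart (k : ℕ) : ℕ := ∑ j ∈ Finset.range k, partSize j

theorem partStart_succ (k : ℕ) : partStart (k + 1) = partStart k + partSize k := by
  simp [partStart, Finset.sum_range_succ]

theorem partStart_mono : Monotone partStart :=
  monotone_nat_of_le_succ (fun k => by rw [partStart_succ]; omega)

theorem partStart_formula (k : ℕ) :
    (partStart k : ℝ) = ((k : ℝ) + 2) * (k + 1) * k * (k - 1) / 8 + k := by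
  induction k with
  | zero => simp [partStart]
  | succ k ih =>
    rw [partStart_succ]
    push_cast
    rw [ih, partSize]
    push_cast
    rw [Nat.cast_choose_two]
    push_cast
    ring

/-- The index of the part containing `i`, when there are `R + 1` parts. -/
def partIdx (R i : ℕ) : ℕ := ((Finset.range R).filter (fun k => partStart (k + 1) ≤ i)).card

theorem partIdx_le (R i : ℕ) : partIdx R i ≤ R :=
  (Finset.card_filter_le _ _).trans (by simp)

theorem partIdx_eq {R i k : ℕ} (hk : k ≤ R) (h1 : partStart k ≤ i)
    (h2 : k < R → i < partStart (k + 1)) : partIdx R i = k := by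
  have : (Finset.range R).filter (fun k => partStart (k + 1) ≤ i) = Finset.range k := by
    ext j
    simp only [Finset.mem_filter, Finset.mem_range]
    constructor
    · rintro ⟨hj, hji⟩
      by_contra hkj
      have h3 := h2 (by omega)
      have h4 : partStart (k + 1) ≤ partStart (j + 1) := partStart_mono (by omega)
      omega
    · intro hj
      exact ⟨by omega, (partStart_mono (by omega : j + 1 ≤ k)).trans h1⟩
  rw [partIdx, this, Finset.card_range]

/-- The complete multipartite base graph. -/
def baseGraph (R n : ℕ) : SimpleGraph (Fin n) where
  Adj i j := partIdx R i ≠ partIdx R j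
  symm := ⟨fun _ _ h => h.symm⟩
  loopless := ⟨fun _ h => h rfl⟩

/-- `S` spans a rainbow clique. -/
def RainbowClique {V : Type} (G : SimpleGraph V) (c : Sym2 V → ℕ) (S : Finset V) : Prop :=
  (∀ a ∈ S, ∀ b ∈ S, a ≠ b → G.Adj a b) ∧
  ∀ a ∈ S, ∀ b ∈ S, ∀ x ∈ S, ∀ y ∈ S, a ≠ b → x ≠ y → s(a, b) ≠ s(x, y) →
    c s(a, b) ≠ c s(x, y)

theorem RainbowClique.hasCopy {V : Type} {G : SimpleGraph V} {c : Sym2 V → ℕ}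
    {S : Finset V} (h : RainbowClique G c S) {m : ℕ} (hm : S.card = m) :
    HasRainbowCopy G (⊤ : SimpleGraph (Fin m)) c := by
  let e := (S.equivFinOfCardEq hm).symm
  have hinj : Function.Injective (fun i => (e i : V)) :=
    Subtype.val_injective.comp e.injective
  refine ⟨fun i => (e i : V), hinj, ?_, ?_⟩
  · intro a b hab
    exact h.1 _ (e a).2 _ (e b).2 (fun hh => hab (hinj hh))
  · intro e₁ h₁ e₂ h₂ hne
    induction e₁ using Sym2.ind with | _ a b => ?_
    induction e₂ using Sym2.ind with | _ x y => ?_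
    have hne' := (Sym2.map.injective hinj).ne hne
    simp only [Sym2.map_mk] at hne' ⊢
    exact h.2 _ (e a).2 _ (e b).2 _ (e x).2 _ (e y).2
      (fun hh => h₁ (hinj hh)) (fun hh => h₂ (hinj hh)) hne'

theorem RainbowClique.extend {V : Type} [DecidableEq V] {G : SimpleGraph V} {c : Sym2 V → ℕ}
    (hc : IsProperEdgeColoring G c)
    {S T : Finset V} (h : RainbowClique G c S)
    (hT : ∀ x ∈ T, ∀ y ∈ S, G.Adj x y)
    (hcard : S.card * (S.card - 1).choose 2 < T.card) :
    ∃ x ∈ T, x ∉ S ∧ RainbowClique G c (insert x S) := by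
  let bad : Finset V := S.biUnion fun y =>
    ((S.erase y).offDiag.image Sym2.mk.uncurry).biUnion
      fun e => T.filter fun x => c s(x, y) = c e
  have hbad : bad.card ≤ S.card * (S.card - 1).choose 2 := by
    refine Finset.card_biUnion_le_card_mul _ _ _ (fun y hy => ?_)
    have h1 : ((S.erase y).offDiag.image Sym2.mk.uncurry).card = (S.card - 1).choose 2 := by
      rw [Sym2.card_image_offDiag, Finset.card_erase_of_mem hy]
    rw [← h1, ← mul_one ((S.erase y).offDiag.image Sym2.mk.uncurry).card]
    refine Finset.card_biUnion_le_card_mul _ _ _ (fun e _ => ?_)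
    rw [Finset.card_le_one]
    intro x hx x' hx'
    rw [Finset.mem_filter] at hx hx'
    by_contra hne
    refine hc s(x, y) (hT x hx.1 y hy) s(x', y) (hT x' hx'.1 y hy) ?_ ⟨y, by simp, by simp⟩
      (hx.2.trans hx'.2.symm)
    intro hh
    exact hne (Sym2.congr_left.1 hh)
  obtain ⟨x, hxT, hxb⟩ := Finset.exists_mem_notMem_of_card_lt_card (hbad.trans_lt hcard)
  have hxS : x ∉ S := fun hx => (hT x hxT x hx).ne rfl
  -- colors at the new vertex against colors inside
  have key : ∀ y ∈ S, ∀ a ∈ S, ∀ b ∈ S, a ≠ b → c s(x, y) ≠ c s(a, b) := by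
    intro y hy a ha b hb hab heq
    by_cases hm : y ∈ s(a, b)
    · refine hc s(x, y) (hT x hxT y hy) s(a, b) (h.1 a ha b hb hab) ?_ ⟨y, by simp, hm⟩ heq
      intro hh
      have hx : x ∈ s(a, b) := hh ▸ (by simp)
      rcases Sym2.mem_iff.1 hx with rfl | rfl <;> contradiction
    · rw [Sym2.mem_iff, not_or] at hm
      apply hxb
      simp only [bad, Finset.mem_biUnion, Finset.mem_filter]
      refine ⟨y, hy, s(a, b), ?_, hxT, heq⟩
      rw [Finset.mem_image]
      exact ⟨(a, b), by simp [ha, hb, hab, Ne.symm hm.1, Ne.symm hm.2], rfl⟩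
  have key2 : ∀ y ∈ S, ∀ z ∈ S, s(x, y) ≠ s(x, z) → c s(x, y) ≠ c s(x, z) := by
    intro y hy z hz hne
    exact hc _ (hT x hxT y hy) _ (hT x hxT z hz) hne ⟨x, by simp, by simp⟩
  have edges : ∀ a ∈ insert x S, ∀ b ∈ insert x S, a ≠ b →
      (∃ y ∈ S, s(a, b) = s(x, y)) ∨ (a ∈ S ∧ b ∈ S) := by
    intro a ha b hb hab
    rcases Finset.mem_insert.1 ha with h1 | h1 <;> rcases Finset.mem_insert.1 hb with h2 | h2
    · exact absurd (h1.trans h2.symm) hab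
    · exact Or.inl ⟨b, h2, by rw [h1]⟩
    · exact Or.inl ⟨a, h1, by rw [h2, Sym2.eq_swap]⟩
    · exact Or.inr ⟨h1, h2⟩
  refine ⟨x, hxT, hxS, ?_, ?_⟩
  · intro a ha b hb hab
    rcases edges a ha b hb hab with ⟨y, hy, he⟩ | ⟨ha, hb⟩
    · rw [← SimpleGraph.mem_edgeSet, he]
      exact hT x hxT y hy
    · exact h.1 a ha b hb hab
  · intro a ha b hb a' ha' b' hb' hab hab' hne
    rcases edges a ha b hb hab with ⟨y, hy, he⟩ | ⟨ha, hb⟩ <;>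
      rcases edges a' ha' b' hb' hab' with ⟨y', hy', he'⟩ | ⟨ha', hb'⟩
    · rw [he, he'] at hne ⊢
      exact key2 y hy y' hy' hne
    · rw [he]
      exact key y hy a' ha' b' hb' hab'
    · rw [he']
      exact (key y' hy' a ha b hb hab).symm
    · exact h.2 a ha b hb a' ha' b' hb' hab hab' hne

/-- Adding an edge inside the last part forces a rainbow clique. -/
theorem forced {R n : ℕ} (hn : partStart R ≤ n) {G : SimpleGraph (Fin n)}
    (hG : baseGraph R n ≤ G) {c : Sym2 (Fin n) → ℕ} (hc : IsProperEdgeColoring G c)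
    {u v : Fin n} (huv : G.Adj u v) (hu : partStart R ≤ u) (hv : partStart R ≤ v) :
    HasRainbowCopy G (⊤ : SimpleGraph (Fin (R + 2))) c := by
  have main : ∀ k ≤ R, ∃ S : Finset (Fin n), S.card = k + 2 ∧ RainbowClique G c S ∧
      ∀ x ∈ S, partIdx R x = R ∨ partIdx R x < k := by
    intro k
    induction k with
    | zero =>
      intro _
      refine ⟨{u, v}, Finset.card_pair huv.ne, ⟨?_, ?_⟩, ?_⟩
      · intro a ha b hb hab
        simp only [Finset.mem_insert, Finset.mem_singleton] at ha hb
        rcases ha with rfl | rfl <;> rcases hb with rfl | rfl <;>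
          first | exact absurd rfl hab | exact huv | exact huv.symm
      · intro a ha b hb a' ha' b' hb' hab hab' hne
        exfalso
        simp only [Finset.mem_insert, Finset.mem_singleton] at ha hb ha' hb'
        rcases ha with rfl | rfl <;> rcases hb with rfl | rfl <;>
          rcases ha' with rfl | rfl <;> rcases hb' with rfl | rfl <;> simp_all [Sym2.eq_swap]
      · intro x hx
        left
        simp only [Finset.mem_insert, Finset.mem_singleton] at hx
        rcases hx with rfl | rfl
        · exact partIdx_eq le_rfl hu (fun h => absurd h (lt_irrefl _))
        · exact partIdx_eq le_rfl hv (fun h => absurd h (lt_irrefl _))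
    | succ k ih =>
      intro hk
      obtain ⟨S, hS, hrb, hidx⟩ := ih (by omega)
      have hle : partStart (k + 1) ≤ n := (partStart_mono hk).trans hn
      let T : Finset (Fin n) := (Finset.Ico (partStart k) (partStart (k + 1))).attachFin
        (fun m hm => (Finset.mem_Ico.1 hm).2.trans_le hle)
      have hTidx : ∀ x ∈ T, partIdx R x = k := by
        intro x hx
        rw [Finset.mem_attachFin, Finset.mem_Ico] at hx
        exact partIdx_eq (by omega) hx.1 (fun _ => hx.2)
      obtain ⟨x, hxT, hxS, hx⟩ := hrb.extend (T := T) hc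
        (by
          intro x hx y hy
          apply hG
          change partIdx R x ≠ partIdx R y
          have := hTidx x hx
          have := hidx y hy
          omega)
        (by
          rw [Finset.card_attachFin, Nat.card_Ico, partStart_succ, hS, partSize]
          simp)
      refine ⟨insert x S, by rw [Finset.card_insert_of_notMem hxS, hS], hx, ?_⟩
      intro y hy
      rcases Finset.mem_insert.1 hy with rfl | hy
      · have := hTidx y hxT
        omega
      · have := hidx y hy
        omega
  obtain ⟨S, hS, hrb, -⟩ := main R le_rfl
  exact hrb.hasCopy hS

theorem base_free (R n : ℕ) (c : Sym2 (Fin n) → ℕ) :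
    ¬ HasRainbowCopy (baseGraph R n) (⊤ : SimpleGraph (Fin (R + 2))) c := by
  rintro ⟨f, -, hadj, -⟩
  obtain ⟨a, b, hab, heq⟩ := Fintype.exists_ne_map_eq_of_card_lt
    (fun i : Fin (R + 2) => (⟨partIdx R (f i), Nat.lt_succ_of_le (partIdx_le _ _)⟩ : Fin (R + 1)))
    (by simp)
  exact hadj a b hab (by simpa using heq)

theorem exists_proper {n : ℕ} (G : SimpleGraph (Fin n)) :
    ∃ c : Sym2 (Fin n) → ℕ, IsProperEdgeColoring G c := by
  obtain ⟨c, hc⟩ := exists_injective_nat (Sym2 (Fin n))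
  exact ⟨c, fun e₁ _ e₂ _ hne _ => hc.ne hne⟩

theorem main_construction (R n : ℕ) (hn : partStart R ≤ n) :
    ∃ G : SimpleGraph (Fin n), IsRainbowSat G (⊤ : SimpleGraph (Fin (R + 2))) ∧
      G.edgeSet.ncard ≤ n * partStart R := by
  let P : Set (SimpleGraph (Fin n)) := {G | baseGraph R n ≤ G ∧
    ∃ c, IsProperEdgeColoring G c ∧ ¬ HasRainbowCopy G (⊤ : SimpleGraph (Fin (R + 2))) c}
  have hP : baseGraph R n ∈ P := by
    obtain ⟨c, hc⟩ := exists_proper (baseGraph R n)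
    exact ⟨le_rfl, c, hc, base_free R n c⟩
  obtain ⟨G, -, hG⟩ := (Set.toFinite P).exists_le_maximal hP
  obtain ⟨hbase, c, hc, hfree⟩ := hG.prop
  refine ⟨G, ⟨⟨c, hc, hfree⟩, ?_⟩, ?_⟩
  · intro u v huv hnadj c' hc'
    by_contra hno
    have hmem : G ⊔ SimpleGraph.fromEdgeSet {s(u, v)} ∈ P :=
      ⟨hbase.trans le_sup_left, c', hc', hno⟩
    have hle := hG.le_of_ge hmem le_sup_left
    exact hnadj (hle (by simp [huv]))
  · let D : Finset (Fin n) := Finset.univ.filter fun i => (i : ℕ) < partStart R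
    have hD : D.card ≤ partStart R := by
      have : D ⊆ (Finset.range (partStart R)).attachFin
          (fun m hm => (Finset.mem_range.1 hm).trans_le hn) := by
        intro x hx
        simpa [D] using hx
      simpa using Finset.card_le_card this
    have hsub : G.edgeSet ⊆ (((Finset.univ : Finset (Fin n)) ×ˢ D).image
        (fun p => s(p.1, p.2)) : Finset (Sym2 (Fin n))) := by
      intro e he
      induction e using Sym2.ind with | _ a b => ?_
      have hab : G.Adj a b := he
      simp only [Finset.coe_image, Set.mem_image, Finset.mem_coe, Finset.mem_product]
      by_cases hb : (b : ℕ) < partStart R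
      · exact ⟨(a, b), by simp [D, hb], rfl⟩
      · by_cases ha : (a : ℕ) < partStart R
        · exact ⟨(b, a), by simp [D, ha], Sym2.eq_swap⟩
        · exact absurd (forced hn hbase hc hab (not_lt.1 ha) (not_lt.1 hb)) hfree
    calc G.edgeSet.ncard ≤ _ := Set.ncard_le_ncard hsub (Finset.finite_toSet _)
      _ ≤ ((Finset.univ : Finset (Fin n)) ×ˢ D).card := by
        rw [Set.ncard_coe_finset]; exact Finset.card_image_le
      _ = n * D.card := by simp
      _ ≤ _ := Nat.mul_le_mul_left _ hD

/-- For every `r ≥ 3` there are `C` and `n₀` such that for all `n ≥ n₀`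
there is an `n`-vertex rainbow `K_{r+1}`-saturated graph with at most `(r⁴/8)n + C` edges. -/
theorem stmt_5 (r : ℕ) (hr : 3 ≤ r) :
    ∃ C : ℝ, ∃ n₀ : ℕ, ∀ n : ℕ, n₀ ≤ n →
      ∃ G : SimpleGraph (Fin n),
        IsRainbowSat G (⊤ : SimpleGraph (Fin (r + 1))) ∧
        (G.edgeSet.ncard : ℝ) ≤ (r : ℝ) ^ 4 / 8 * (n : ℝ) + C := by
  obtain ⟨R, rfl⟩ : ∃ R, r = R + 1 := ⟨r - 1, by omega⟩
  refine ⟨0, partStart R, fun n hn => ?_⟩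
  obtain ⟨G, hG, hcard⟩ := main_construction R n hn
  refine ⟨G, hG, ?_⟩
  have h1 : (G.edgeSet.ncard : ℝ) ≤ n * partStart R := by exact_mod_cast hcard
  have hR : (2 : ℝ) ≤ R := by exact_mod_cast (by omega : 2 ≤ R)
  have h2 : (partStart R : ℝ) ≤ ((R + 1 : ℕ) : ℝ) ^ 4 / 8 := by
    rw [partStart_formula]
    push_cast
    obtain ⟨t, ht, hRt⟩ : ∃ t : ℝ, 0 ≤ t ∧ (R : ℝ) = t + 2 := ⟨(R : ℝ) - 2, by linarith, by ring⟩
    rw [hRt]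
    have := pow_nonneg ht 3
    nlinarith [pow_nonneg ht 2]
  have h3 := mul_le_mul_of_nonneg_left h2 (Nat.cast_nonneg (α := ℝ) n)
  linarith
end

section
/- If G is a rainbow K_4-saturated graph and x, y are vertices of G with xy not an edge of G, then the common neighborhood N(x) ∩ N(y) contains two adjacent vertices. -/
open SimpleGraph

/-- In a rainbow `K_4`-saturated graph, the common neighborhood of any
two nonadjacent vertices contains two adjacent vertices. -/
theorem stmt_6 {V : Type} (G : SimpleGraph V)
    (hsat : IsRainbowSat G (⊤ : SimpleGraph (Fin 4)))
    (x y : V) (hxy : x ≠ y) (hne : ¬ G.Adj x y) :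
    ∃ a ∈ G.neighborSet x ∩ G.neighborSet y,
      ∃ b ∈ G.neighborSet x ∩ G.neighborSet y, G.Adj a b := by
  classical
  obtain ⟨⟨c, hc, hno⟩, hs⟩ := hsat
  have hE : ∀ e : Sym2 V, e ∈ (G ⊔ SimpleGraph.fromEdgeSet {s(x, y)}).edgeSet →
      e ≠ s(x, y) → e ∈ G.edgeSet := by
    intro e he hn
    rw [SimpleGraph.edgeSet_sup] at he
    rcases he with he | he
    · exact he
    · rw [SimpleGraph.edgeSet_fromEdgeSet] at he
      exact absurd he.1 hn
  obtain ⟨f, hinj, hadj, hrb⟩ := hs x y hxy hne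
    (fun e => if e = s(x, y) then 0 else c e + 1) (by
      intro e₁ h₁ e₂ h₂ h12 hv
      by_cases a₁ : e₁ = s(x, y) <;> by_cases a₂ : e₂ = s(x, y)
      · exact absurd (a₁.trans a₂.symm) h12
      · simp [a₁, a₂]
      · simp [a₁, a₂]
      · have := hc e₁ (hE _ h₁ a₁) e₂ (hE _ h₂ a₂) h12 hv
        simpa [a₁, a₂] using this)
  have hG : ∀ a b, a ≠ b → s(f a, f b) ≠ s(x, y) → G.Adj (f a) (f b) :=
    fun a b hab hn => hE s(f a, f b) (hadj a b hab) hn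
  by_cases hij : ∃ i j, f i = x ∧ f j = y
  · obtain ⟨i, j, rfl, rfl⟩ := hij
    have hk : ∀ i j : Fin 4, ∃ k l : Fin 4, k ≠ i ∧ k ≠ j ∧ l ≠ i ∧ l ≠ j ∧ k ≠ l := by
      decide
    obtain ⟨k, l, hki, hkj, hli, hlj, hkl⟩ := hk i j
    have key : ∀ a b, a ≠ b → b ≠ i → b ≠ j → G.Adj (f a) (f b) := by
      intro a b hab hi hj
      apply hG a b hab
      intro h
      have hm : f b ∈ s(f i, f j) := h ▸ Sym2.mem_mk_right _ _
      rcases Sym2.mem_iff.1 hm with h | h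
      · exact hi (hinj h)
      · exact hj (hinj h)
    exact ⟨f k, ⟨key _ _ hki.symm hki hkj, key _ _ hkj.symm hki hkj⟩,
      f l, ⟨key _ _ hli.symm hli hlj, key _ _ hlj.symm hli hlj⟩, key _ _ hkl hli hlj⟩
  · exfalso
    have hn : ∀ e : Sym2 (Fin 4), Sym2.map f e ≠ s(x, y) := by
      intro e
      induction e with
      | _ a b =>
        intro h
        rw [Sym2.map_mk, Sym2.eq_iff] at h
        rcases h with h | h
        · exact hij ⟨a, b, h.1, h.2⟩
        · exact hij ⟨b, a, h.2, h.1⟩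
    refine hno ⟨f, hinj, fun a b hab => hG a b hab (hn s(a, b)), ?_⟩
    intro e₁ h₁ e₂ h₂ h12 h
    apply hrb e₁ h₁ e₂ h₂ h12
    simp [hn, h]
end

section
/- If G is a rainbow K_4-saturated graph, then the set of vertices of G having degree at most 3 forms a clique (every two such vertices are adjacent). -/
open SimpleGraph

/-- Two-variable form of the modified coloring: `uv` gets `k`, edges `uw` get `p w`,
edges `vw` get `q w`, the others keep their color. -/
noncomputable def recol {V : Type} (c : Sym2 V → ℕ) (u v : V) (p q : V → ℕ) (k : ℕ)
    (x y : V) : ℕ :=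
  open Classical in
  if (x = u ∧ y = v) ∨ (x = v ∧ y = u) then k
  else if x = u then p y else if y = u then p x
  else if x = v then q y else if y = v then q x else c s(x, y)

theorem recol_symm {V : Type} (c : Sym2 V → ℕ) (u v : V) (p q : V → ℕ) (k : ℕ) (x y : V) :
    recol c u v p q k x y = recol c u v p q k y x := by
  unfold recol
  have := @Sym2.eq_swap V x y
  grind

/-- The conditions on `p`, `q`, `k` making the recoloring proper and rainbow `K_4`-free. -/
structure Good {V : Type} (G : SimpleGraph V) (c : Sym2 V → ℕ) (u v : V) (p q : V → ℕ)
    (k : ℕ) : Prop where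
  pinj : ∀ w z, G.Adj u w → G.Adj u z → w ≠ z → p w ≠ p z
  qinj : ∀ w z, G.Adj v w → G.Adj v z → w ≠ z → q w ≠ q z
  pk : ∀ w, G.Adj u w → p w ≠ k
  qk : ∀ w, G.Adj v w → q w ≠ k
  pc : ∀ w z, G.Adj u w → G.Adj w z → z ≠ u → z ≠ v → p w ≠ c s(w, z)
  qc : ∀ w z, G.Adj v w → G.Adj w z → z ≠ u → z ≠ v → q w ≠ c s(w, z)
  pq : ∀ w, G.Adj u w → G.Adj v w → p w ≠ q w
  pkill : ∀ w z t, G.Adj u w → G.Adj u z → G.Adj u t → G.Adj w z → G.Adj w t → G.Adj z t →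
    p w = c s(z, t) ∨ p z = c s(w, t) ∨ p t = c s(w, z)
  qkill : ∀ w z t, G.Adj v w → G.Adj v z → G.Adj v t → G.Adj w z → G.Adj w t → G.Adj z t →
    q w = c s(z, t) ∨ q z = c s(w, t) ∨ q t = c s(w, z)
  pqkill : ∀ w z, G.Adj u w → G.Adj u z → G.Adj v w → G.Adj v z → G.Adj w z →
    k = c s(w, z) ∨ p w = q z ∨ p z = q w

theorem Good.swap {V : Type} {G : SimpleGraph V} {c : Sym2 V → ℕ} {u v : V} {p q : V → ℕ}
    {k : ℕ} (h : Good G c u v p q k) : Good G c v u q p k where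
  pinj := h.qinj
  qinj := h.pinj
  pk := h.qk
  qk := h.pk
  pc := fun w z h1 h2 h3 h4 => h.qc w z h1 h2 h4 h3
  qc := fun w z h1 h2 h3 h4 => h.pc w z h1 h2 h4 h3
  pq := fun w h1 h2 => (h.pq w h2 h1).symm
  pkill := h.qkill
  qkill := h.pkill
  pqkill := fun w z h1 h2 h3 h4 h5 => by
    have := h.pqkill w z h3 h4 h1 h2 h5
    grind

/-- Properness in two-variable form. -/
theorem proper_adj {V : Type} {G : SimpleGraph V} {c : Sym2 V → ℕ}
    (h : IsProperEdgeColoring G c) {x y z : V} (h1 : G.Adj x y) (h2 : G.Adj x z)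
    (h3 : y ≠ z) : c s(x, y) ≠ c s(x, z) := by
  apply h s(x, y) h1 s(x, z) h2
  · simpa using ⟨h3, by grind⟩
  · exact ⟨x, by simp, by simp⟩

/-- Absence of rainbow `K_4` in four-variable form. -/
theorem kill_adj {V : Type} {G : SimpleGraph V} {c : Sym2 V → ℕ}
    (hp : IsProperEdgeColoring G c)
    (h : ¬ HasRainbowCopy G (⊤ : SimpleGraph (Fin 4)) c) {x y z t : V}
    (xy : G.Adj x y) (xz : G.Adj x z) (xt : G.Adj x t) (yz : G.Adj y z) (yt : G.Adj y t)
    (zt : G.Adj z t) :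
    c s(x, y) = c s(z, t) ∨ c s(x, z) = c s(y, t) ∨ c s(x, t) = c s(y, z) := by
  by_contra hcon
  push Not at hcon
  obtain ⟨n1, n2, n3⟩ := hcon
  apply h
  have hadj : ∀ i j : Fin 4, i ≠ j → G.Adj (![x, y, z, t] i) (![x, y, z, t] j) := by
    intro i j hij
    fin_cases i <;> fin_cases j <;> simp_all [G.adj_comm]
  refine ⟨![x, y, z, t], ?_, fun i j hij => hadj i j hij.ne, ?_⟩
  · intro i j hij
    by_contra hne
    exact (hadj i j hne).ne hij
  · have disj : ∀ i j k l : Fin 4, i ≠ j → i ≠ k → i ≠ l → j ≠ k → j ≠ l → k ≠ l →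
        c s(![x, y, z, t] i, ![x, y, z, t] j) ≠ c s(![x, y, z, t] k, ![x, y, z, t] l) := by
      have e1 := @Sym2.eq_swap V x y
      have e2 := @Sym2.eq_swap V x z
      have e3 := @Sym2.eq_swap V x t
      have e4 := @Sym2.eq_swap V y z
      have e5 := @Sym2.eq_swap V y t
      have e6 := @Sym2.eq_swap V z t
      intro i j k l
      fin_cases i <;> fin_cases j <;> simp <;> fin_cases k <;> simp <;>
        fin_cases l <;> simp <;> grind
    intro e1 he1 e2 he2 hne
    by_cases hs : ∃ w, w ∈ e1 ∧ w ∈ e2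
    · obtain ⟨w, hw1, hw2⟩ := hs
      obtain ⟨a, rfl⟩ := Sym2.mem_iff_exists.mp hw1
      obtain ⟨b, rfl⟩ := Sym2.mem_iff_exists.mp hw2
      have ha : w ≠ a := by simpa using he1
      have hb : w ≠ b := by simpa using he2
      have hab : a ≠ b := fun hh => hne (by rw [hh])
      exact proper_adj hp (hadj w a ha) (hadj w b hb) (hadj a b hab).ne
    · induction e1 with | _ a b
      induction e2 with | _ a' b'
      have ha : a ≠ b := by simpa using he1
      have hb : a' ≠ b' := by simpa using he2
      simp only [Sym2.map_mk]
      push Not at hs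
      have h1 := hs a (by simp)
      have h2 := hs b (by simp)
      simp only [Sym2.mem_iff, not_or] at h1 h2
      exact disj a b a' b' ha h1.1 h1.2 h2.1 h2.2 hb

/-- A good recoloring contradicts saturation. -/
theorem good_false {V : Type} {G : SimpleGraph V} {c : Sym2 V → ℕ} {u v : V}
    (hc : IsProperEdgeColoring G c)
    (hcr : ¬ HasRainbowCopy G (⊤ : SimpleGraph (Fin 4)) c)
    (huv : u ≠ v) (hn : ¬ G.Adj u v)
    (hs : ∀ c : Sym2 V → ℕ,
      IsProperEdgeColoring (G ⊔ SimpleGraph.fromEdgeSet {s(u, v)}) c →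
      HasRainbowCopy (G ⊔ SimpleGraph.fromEdgeSet {s(u, v)}) (⊤ : SimpleGraph (Fin 4)) c)
    {p q : V → ℕ} {k : ℕ} (hg : Good G c u v p q k) : False := by
  have hadj : ∀ x y, (G ⊔ SimpleGraph.fromEdgeSet {s(u, v)}).Adj x y ↔
      (G.Adj x y ∨ (x = u ∧ y = v) ∨ (x = v ∧ y = u)) := by
    intro x y
    simp only [SimpleGraph.sup_adj, SimpleGraph.fromEdgeSet_adj, Set.mem_singleton_iff,
      Sym2.eq_iff]
    grind
  have hn' : ¬ G.Adj v u := fun h => hn h.symm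
  have dsymm := recol_symm c u v p q k
  have duv : recol c u v p q k u v = k := by simp [recol]
  have du : ∀ w, w ≠ v → recol c u v p q k u w = p w := by
    intro w h; simp [recol, h, huv]
  have dv : ∀ w, w ≠ u → recol c u v p q k v w = q w := by
    intro w h; simp [recol, h, huv.symm]
  have dc : ∀ x y, x ≠ u → x ≠ v → y ≠ u → y ≠ v →
      recol c u v p q k x y = c s(x, y) := by
    intro x y h1 h2 h3 h4; simp [recol, h1, h2, h3, h4]
  generalize recol c u v p q k = d at *
  obtain ⟨f, finj, fadj, frb⟩ := hs (fun e => Sym2.lift ⟨d, dsymm⟩ e) (by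
    intro e1 he1 e2 he2 hne hw
    obtain ⟨w, hw1, hw2⟩ := hw
    obtain ⟨a, rfl⟩ := Sym2.mem_iff_exists.mp hw1
    obtain ⟨b, rfl⟩ := Sym2.mem_iff_exists.mp hw2
    have hab : a ≠ b := fun hh => hne (by rw [hh])
    simp only [SimpleGraph.mem_edgeSet, hadj] at he1 he2
    simp only [Sym2.lift_mk]
    clear hne hw1 hw2 hs
    have hpr : G.Adj w a → G.Adj w b → c s(w, a) ≠ c s(w, b) :=
      fun h1 h2 => proper_adj hc h1 h2 hab
    have g1 := hg.pinj a b
    have g2 := hg.qinj a b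
    have g3 := hg.pk a
    have g4 := hg.pk b
    have g5 := hg.qk a
    have g6 := hg.qk b
    have g7 := hg.pc w a
    have g8 := hg.pc w b
    have g9 := hg.qc w a
    have g10 := hg.qc w b
    have g11 := hg.pq w
    have s1 := G.adj_comm w a
    have s2 := G.adj_comm w b
    have t1 := dsymm w a
    have t2 := dsymm w b
    have dua := du a
    have dub := du b
    have duw := du w
    have dva := dv a
    have dvb := dv b
    have dvw := dv w
    have dca := dc w a
    have dcb := dc w b
    have i1 := G.irrefl (v := u)
    have i2 := G.irrefl (v := v)
    clear du dv dc hg hc hcr hadj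
    by_cases wu : w = u
    · subst wu
      by_cases av : a = v
      · subst av; grind
      by_cases bv : b = v
      · subst bv; grind
      grind
    by_cases wv : w = v
    · subst wv
      by_cases av : a = u
      · subst av; grind
      by_cases bv : b = u
      · subst bv; grind
      grind
    by_cases au : a = u
    · subst au
      by_cases bv : b = v
      · subst bv; grind
      grind
    by_cases av : a = v
    · subst av
      by_cases bv : b = u
      · subst bv; grind
      grind
    by_cases bu : b = u
    · subst bu; grind
    by_cases bv : b = v
    · subst bv; grind
    grind)
  have fadj' : ∀ i j, i ≠ j → (G.Adj (f i) (f j) ∨ (f i = u ∧ f j = v) ∨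
      (f i = v ∧ f j = u)) := by
    intro i j hij
    exact (hadj _ _).mp (fadj i j hij)
  have fd : ∀ i j k l : Fin 4, i ≠ j → i ≠ k → i ≠ l → k ≠ l →
      d (f i) (f j) ≠ d (f k) (f l) := by
    intro i j k l h1 h2 h3 h4
    have := frb s(i, j) (by simpa using h1) s(k, l) (by simpa using h4)
      (by rw [Ne, Sym2.eq_iff]; grind)
    simpa using this
  clear frb fadj hadj hs
  have hex2 : ∀ i j : Fin 4, i ≠ j → ∃ k l : Fin 4, i ≠ k ∧ i ≠ l ∧ j ≠ k ∧ j ≠ l ∧ k ≠ l := by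
    decide
  have hex1 : ∀ i : Fin 4, ∃ j k l : Fin 4, i ≠ j ∧ i ≠ k ∧ i ≠ l ∧ j ≠ k ∧ j ≠ l ∧ k ≠ l := by
    decide
  have fne : ∀ i j, i ≠ j → f i ≠ f j := fun i j h h' => h (finj h')
  by_cases hu : ∃ i, f i = u
  · obtain ⟨i, rfl⟩ := hu
    by_cases hv : ∃ j, f j = v
    · obtain ⟨j, rfl⟩ := hv
      have hij : i ≠ j := fun h => huv (by rw [h])
      obtain ⟨m, n, im, iN, jm, jn, mn⟩ := hex2 i j hij
      have a1 := fadj' i m im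
      have a2 := fadj' i n iN
      have a3 := fadj' j m jm
      have a4 := fadj' j n jn
      have a5 := fadj' m n mn
      have b1 := fne i m im
      have b2 := fne i n iN
      have b3 := fne j m jm
      have b4 := fne j n jn
      have f1 := fd i j m n hij im iN mn
      have f2 := fd i m j n im hij iN jn
      have f3 := fd i n j m iN hij im jm
      have e1 := du (f m) b3.symm
      have e2 := du (f n) b4.symm
      have e3 := dv (f m) b1.symm
      have e4 := dv (f n) b2.symm
      have e5 := dc (f m) (f n) b1.symm b3.symm b2.symm b4.symm
      have := hg.pqkill (f m) (f n)
      clear fadj' fd dc du dv hg fne hex1 hex2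
      grind
    · push Not at hv
      obtain ⟨j, m, n, ij, im, iN, jm, jn, mn⟩ := hex1 i
      have a1 := fadj' i m im
      have a2 := fadj' i n iN
      have a3 := fadj' j m jm
      have a4 := fadj' j n jn
      have a5 := fadj' m n mn
      have a6 := fadj' i j ij
      simp only [hv, and_false, false_and, or_false] at a1 a2 a3 a4 a5 a6
      have b1 := fne i m im
      have b2 := fne i n iN
      have b3 := fne i j ij
      have f1 := fd i j m n ij im iN mn
      have f2 := fd i m j n im ij iN jn
      have f3 := fd i n j m iN ij im jm
      rw [du _ (hv _), dc _ _ (Ne.symm (by assumption)) (hv _) (Ne.symm (by assumption)) (hv _)]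
        at f1 f2 f3
      have := hg.pkill (f j) (f m) (f n) a6 a1 a2 a3 a4 a5
      tauto
  · push Not at hu
    by_cases hv : ∃ j, f j = v
    · obtain ⟨i, rfl⟩ := hv
      obtain ⟨j, m, n, ij, im, iN, jm, jn, mn⟩ := hex1 i
      have a1 := fadj' i m im
      have a2 := fadj' i n iN
      have a3 := fadj' j m jm
      have a4 := fadj' j n jn
      have a5 := fadj' m n mn
      have a6 := fadj' i j ij
      simp only [hu, and_false, false_and, or_false] at a1 a2 a3 a4 a5 a6
      have b1 := fne i m im
      have b2 := fne i n iN
      have b3 := fne i j ij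
      have f1 := fd i j m n ij im iN mn
      have f2 := fd i m j n im ij iN jn
      have f3 := fd i n j m iN ij im jm
      rw [dv _ (hu _), dc _ _ (hu _) (Ne.symm (by assumption)) (hu _) (Ne.symm (by assumption))]
        at f1 f2 f3
      have := hg.qkill (f j) (f m) (f n) a6 a1 a2 a3 a4 a5
      tauto
    · push Not at hv
      have fd' : ∀ i j k l : Fin 4, i ≠ j → i ≠ k → i ≠ l → k ≠ l →
          c s(f i, f j) ≠ c s(f k, f l) := by
        intro i j k l h1 h2 h3 h4
        have := fd i j k l h1 h2 h3 h4
        rwa [dc _ _ (hu _) (hv _) (hu _) (hv _), dc _ _ (hu _) (hv _) (hu _) (hv _)] at this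
      simp only [hu, hv, and_false, or_false] at fadj'
      rcases kill_adj hc hcr (fadj' 0 1 (by decide)) (fadj' 0 2 (by decide))
        (fadj' 0 3 (by decide)) (fadj' 1 2 (by decide)) (fadj' 1 3 (by decide))
        (fadj' 2 3 (by decide)) with h | h | h
      · exact fd' 0 1 2 3 (by decide) (by decide) (by decide) (by decide) h
      · exact fd' 0 2 1 3 (by decide) (by decide) (by decide) (by decide) h
      · exact fd' 0 3 1 2 (by decide) (by decide) (by decide) (by decide) h

/-- First recoloring: `ux` already matches `ab`, the `K_4` on `v, a, b, y` is destroyed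
by `vy` or `va`; give `ua` and `vb` a common fresh color. -/
theorem good_one {V : Type} {G : SimpleGraph V} {c : Sym2 V → ℕ} {u v a b x y : V} {M : ℕ}
    (hc : IsProperEdgeColoring G c) (hM : ∀ e, c e < M)
    (hab : G.Adj a b) (hxa : x ≠ a) (hxb : x ≠ b) (hya : y ≠ a) (hyb : y ≠ b) (hxy : x ≠ y)
    (hu : ∀ w, G.Adj u w → w = a ∨ w = b ∨ w = x)
    (hv : ∀ w, G.Adj v w → w = a ∨ w = b ∨ w = y)
    (hux : c s(u, x) = c s(a, b))
    (hvy : G.Adj v a → G.Adj v b → G.Adj v y → G.Adj a y → G.Adj b y →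
      c s(v, y) = c s(a, b) ∨ c s(v, a) = c s(b, y)) :
    ∃ p q k, Good G c u v p q k := by
  classical
  have hne := hab.ne
  have sw : ∀ x y : V, s(x, y) = s(y, x) := fun x y => Sym2.eq_swap
  have P : ∀ x y z, G.Adj x y → G.Adj x z → y ≠ z → c s(x, y) ≠ c s(x, z) :=
    fun x y z h1 h2 h3 => proper_adj hc h1 h2 h3
  have P' : ∀ u w z, G.Adj u w → G.Adj w z → z ≠ u → c s(u, w) ≠ c s(w, z) := by
    intro u w z h1 h2 h3
    rw [sw u w]
    exact P w u z h1.symm h2 h3.symm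
  refine ⟨fun w => if w = a then M else c s(u, w), fun w => if w = b then M else c s(v, w),
    M + 1, ?_, ?_, ?_, ?_, ?_, ?_, ?_, ?_, ?_, ?_⟩
  · intro w z h1 h2 h3
    have := P u w z h1 h2 h3
    have := hM s(u, w)
    have := hM s(u, z)
    grind
  · intro w z h1 h2 h3
    have := P v w z h1 h2 h3
    have := hM s(v, w)
    have := hM s(v, z)
    grind
  · intro w h1
    have := hM s(u, w)
    grind
  · intro w h1
    have := hM s(v, w)
    grind
  · intro w z h1 h2 h3 h4
    have := P' u w z h1 h2 h3
    have := hM s(w, z)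
    grind
  · intro w z h1 h2 h3 h4
    have := P' v w z h1 h2 h4
    have := hM s(w, z)
    grind
  · intro w h1 h2
    have := hM s(u, w)
    have := hM s(v, w)
    have := hu w h1
    have := hv w h2
    grind
  · intro w z t h1 h2 h3 h4 h5 h6
    have n1 := h4.ne
    have n2 := h5.ne
    have n3 := h6.ne
    rcases hu w h1 with rfl | rfl | rfl <;> rcases hu z h2 with rfl | rfl | rfl <;>
      rcases hu t h3 with rfl | rfl | rfl <;> first | contradiction | grind
  · intro w z t h1 h2 h3 h4 h5 h6
    have n1 := h4.ne
    have n2 := h5.ne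
    have n3 := h6.ne
    have s4 := h4.symm
    have s5 := h5.symm
    have s6 := h6.symm
    rcases hv w h1 with rfl | rfl | rfl <;> rcases hv z h2 with rfl | rfl | rfl <;>
      rcases hv t h3 with rfl | rfl | rfl <;> first | contradiction | grind
  · intro w z h1 h2 h3 h4 h5
    have := h5.ne
    have := hu w h1
    have := hu z h2
    have := hv w h3
    have := hv z h4
    grind

/-- Second recoloring: keep everything and color `uv` like `ab`. -/
theorem good_two {V : Type} {G : SimpleGraph V} {c : Sym2 V → ℕ} {u v a b : V} {k : ℕ}
    (hc : IsProperEdgeColoring G c)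
    (hcr : ¬ HasRainbowCopy G (⊤ : SimpleGraph (Fin 4)) c) (huv : u ≠ v)
    (hk1 : ∀ w, G.Adj u w → c s(u, w) ≠ k) (hk2 : ∀ w, G.Adj v w → c s(v, w) ≠ k)
    (hcom : ∀ w z, G.Adj u w → G.Adj u z → G.Adj v w → G.Adj v z → G.Adj w z →
      k = c s(w, z)) :
    Good G c u v (fun w => c s(u, w)) (fun w => c s(v, w)) k := by
  have sw : ∀ x y : V, s(x, y) = s(y, x) := fun x y => Sym2.eq_swap
  have P : ∀ x y z, G.Adj x y → G.Adj x z → y ≠ z → c s(x, y) ≠ c s(x, z) :=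
    fun x y z h1 h2 h3 => proper_adj hc h1 h2 h3
  have P' : ∀ u w z, G.Adj u w → G.Adj w z → z ≠ u → c s(u, w) ≠ c s(w, z) := by
    intro u w z h1 h2 h3
    rw [sw u w]
    exact P w u z h1.symm h2 h3.symm
  exact
  { pinj := P u
    qinj := P v
    pk := hk1
    qk := hk2
    pc := fun w z h1 h2 h3 _ => P' u w z h1 h2 h3
    qc := fun w z h1 h2 _ h4 => P' v w z h1 h2 h4
    pq := fun w h1 h2 => by
      have := P' u w v h1 h2.symm huv.symm
      rwa [sw w v] at this
    pkill := fun w z t h1 h2 h3 h4 h5 h6 => kill_adj hc hcr h1 h2 h3 h4 h5 h6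
    qkill := fun w z t h1 h2 h3 h4 h5 h6 => kill_adj hc hcr h1 h2 h3 h4 h5 h6
    pqkill := fun w z h1 h2 h3 h4 h5 => Or.inl (hcom w z h1 h2 h3 h4 h5) }

/-- Third recoloring: three common neighbors not forming a triangle; all fresh colors. -/
theorem good_three {V : Type} {G : SimpleGraph V} {c : Sym2 V → ℕ} {u v a b d : V} {M : ℕ}
    (hM : ∀ e, c e < M) (hab : a ≠ b) (had : a ≠ d) (hbd : b ≠ d)
    (hu : ∀ w, G.Adj u w → w = a ∨ w = b ∨ w = d)
    (hv : ∀ w, G.Adj v w → w = a ∨ w = b ∨ w = d)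
    (ht : ¬ (G.Adj a b ∧ G.Adj a d ∧ G.Adj b d)) :
    ∃ p q k, Good G c u v p q k := by
  classical
  refine ⟨fun w => if w = a then M else if w = b then M + 1 else M + 2,
    fun w => if w = a then M + 1 else if w = b then M + 2 else M,
    M + 3, ?_, ?_, ?_, ?_, ?_, ?_, ?_, ?_, ?_, ?_⟩
  · grind
  · grind
  · grind
  · grind
  · intro w z h1 h2 h3 h4
    have := hM s(w, z)
    grind
  · intro w z h1 h2 h3 h4
    have := hM s(w, z)
    grind
  · grind
  · intro w z t h1 h2 h3 h4 h5 h6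
    exfalso
    have n1 := h4.ne
    have n2 := h5.ne
    have n3 := h6.ne
    have s4 := h4.symm
    have s5 := h5.symm
    have s6 := h6.symm
    have := hu w h1
    have := hu z h2
    have := hu t h3
    grind
  · intro w z t h1 h2 h3 h4 h5 h6
    exfalso
    have n1 := h4.ne
    have n2 := h5.ne
    have n3 := h6.ne
    have s4 := h4.symm
    have s5 := h5.symm
    have s6 := h6.symm
    have := hv w h1
    have := hv z h2
    have := hv t h3
    grind
  · intro w z h1 h2 h3 h4 h5
    have := h5.ne
    have := hu w h1
    have := hu z h2
    grind

/-- Fourth recoloring: three common neighbors forming a triangle, `ua` matches `bd` and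
`vb` matches `ad`. -/
theorem good_four {V : Type} {G : SimpleGraph V} {c : Sym2 V → ℕ} {u v a b d : V} {M : ℕ}
    (hc : IsProperEdgeColoring G c) (hM : ∀ e, c e < M)
    (hab : G.Adj a b) (had : G.Adj a d) (hbd : G.Adj b d)
    (hua : G.Adj u a) (hub : G.Adj u b) (hva : G.Adj v a) (hvb : G.Adj v b)
    (hu : ∀ w, G.Adj u w → w = a ∨ w = b ∨ w = d)
    (hv : ∀ w, G.Adj v w → w = a ∨ w = b ∨ w = d)
    (h1 : c s(u, a) = c s(b, d)) (h2 : c s(v, b) = c s(a, d)) :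
    ∃ p q k, Good G c u v p q k := by
  classical
  have nab := hab.ne
  have nad := had.ne
  have nbd := hbd.ne
  have sw : ∀ x y : V, s(x, y) = s(y, x) := fun x y => Sym2.eq_swap
  have P : ∀ x y z, G.Adj x y → G.Adj x z → y ≠ z → c s(x, y) ≠ c s(x, z) :=
    fun x y z h1 h2 h3 => proper_adj hc h1 h2 h3
  have P' : ∀ u w z, G.Adj u w → G.Adj w z → z ≠ u → c s(u, w) ≠ c s(w, z) := by
    intro u w z h1 h2 h3
    rw [sw u w]
    exact P w u z h1.symm h2 h3.symm
  have k1 := P' u a b hua hab hub.ne'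
  have k2 := P' v b a hvb hab.symm hva.ne'
  rw [sw b a] at k2
  have ma := hM s(u, a)
  have mb := hM s(v, b)
  have mab := hM s(a, b)
  refine ⟨fun w => if w = a then c s(u, a) else if w = b then M else M + 1,
    fun w => if w = a then M + 1 else if w = b then c s(v, b) else M,
    c s(a, b), ?_, ?_, ?_, ?_, ?_, ?_, ?_, ?_, ?_, ?_⟩
  · grind
  · grind
  · grind
  · grind
  · intro w z h1 h2 h3 h4
    have := hM s(w, z)
    have := P' u w z h1 h2 h3
    grind
  · intro w z h1 h2 h3 h4
    have := hM s(w, z)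
    have := P' v w z h1 h2 h4
    grind
  · grind
  · intro w z t h1 h2 h3 h4 h5 h6
    have n1 := h4.ne
    have n2 := h5.ne
    have n3 := h6.ne
    have := hu w h1
    have := hu z h2
    have := hu t h3
    grind
  · intro w z t h1 h2 h3 h4 h5 h6
    have n1 := h4.ne
    have n2 := h5.ne
    have n3 := h6.ne
    have := hv w h1
    have := hv z h2
    have := hv t h3
    grind
  · intro w z h1 h2 h3 h4 h5
    have := h5.ne
    have := hu w h1
    have := hu z h2
    grind

/-- Description of the neighborhood of a vertex of degree at most 3 with two known neighbors. -/
theorem third_nbr {V : Type} [Fintype V] {G : SimpleGraph V} {u a b : V}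
    (h : (G.neighborSet u).ncard ≤ 3) (ha : G.Adj u a) (hb : G.Adj u b) (hab : a ≠ b) :
    ∃ x, x ≠ a ∧ x ≠ b ∧ (∀ w, G.Adj u w → w = a ∨ w = b ∨ w = x) ∧ (x = u ∨ G.Adj u x) := by
  by_cases hx : ∃ x, G.Adj u x ∧ x ≠ a ∧ x ≠ b
  · obtain ⟨x, h1, h2, h3⟩ := hx
    refine ⟨x, h2, h3, ?_, Or.inr h1⟩
    have h3 : ({a, b, x} : Set V).ncard = 3 := by
      rw [Set.ncard_eq_three]
      exact ⟨a, b, x, hab, h2.symm, h3.symm, rfl⟩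
    have hsub : ({a, b, x} : Set V) ⊆ G.neighborSet u := by
      intro w hw
      rcases hw with rfl | rfl | rfl <;> assumption
    have := Set.eq_of_subset_of_ncard_le hsub (by omega) (Set.toFinite _)
    intro w hw
    have hw' : w ∈ G.neighborSet u := hw
    rw [← this] at hw'
    simpa using hw'
  · push Not at hx
    refine ⟨u, ha.ne, hb.ne, ?_, Or.inl rfl⟩
    intro w hw
    have := hx w hw
    tauto

/-- In a rainbow `K_4`-saturated graph, the vertices of degree at most 3
form a clique. -/
theorem stmt_8 {V : Type} [Fintype V] (G : SimpleGraph V)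
    (hsat : IsRainbowSat G (⊤ : SimpleGraph (Fin 4))) :
    G.IsClique {v : V | (G.neighborSet v).ncard ≤ 3} := by
  intro u hu3 v hv3 huv
  by_contra hn
  obtain ⟨⟨c, hc, hcr⟩, hs⟩ := hsat
  have H : ∀ p q k, Good G c u v p q k → False := fun p q k hg =>
    good_false hc hcr huv hn (hs u v huv hn) hg
  clear hs
  obtain ⟨M, hM⟩ : ∃ M, ∀ e, c e < M := by
    obtain ⟨M, hM⟩ := (Set.finite_range c).bddAbove
    exact ⟨M + 1, fun e => Nat.lt_succ_of_le (hM ⟨e, rfl⟩)⟩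
  by_cases hcom : ∃ a b, G.Adj u a ∧ G.Adj u b ∧ G.Adj v a ∧ G.Adj v b ∧ G.Adj a b
  swap
  · push Not at hcom
    refine H _ _ M (good_two (a := u) (b := v) hc hcr huv (fun w _ => (hM _).ne)
      (fun w _ => (hM _).ne) ?_)
    intro w z h1 h2 h3 h4 h5
    exact absurd h5 (hcom w z h1 h2 h3 h4)
  obtain ⟨a, b, ua, ub, va, vb, ab⟩ := hcom
  obtain ⟨x, xa, xb, hux, hx⟩ := third_nbr hu3 ua ub ab.ne
  obtain ⟨y, ya, yb, hvy, hy⟩ := third_nbr hv3 va vb ab.ne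
  have sw : ∀ x y : V, s(x, y) = s(y, x) := fun x y => Sym2.eq_swap
  have hux' : ∀ w, G.Adj u w → w = b ∨ w = a ∨ w = x := fun w h => by
    have := hux w h
    tauto
  have hvy' : ∀ w, G.Adj v w → w = b ∨ w = a ∨ w = y := fun w h => by
    have := hvy w h
    tauto
  by_cases hxy : x = y
  · subst hxy
    have hn' : ¬ G.Adj v u := fun h => hn h.symm
    have ux : G.Adj u x := by
      rcases hx with rfl | h
      · rcases hy with h | h
        · exact absurd h huv
        · exact absurd h hn'
      · exact h
    have vx : G.Adj v x := by
      rcases hy with rfl | h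
      · exact absurd ux hn
      · exact h
    by_cases ht : G.Adj a b ∧ G.Adj a x ∧ G.Adj b x
    swap
    · obtain ⟨p, q, k, hg⟩ := good_three hM ab.ne xa.symm xb.symm hux hvy ht
      exact H p q k hg
    obtain ⟨-, ax, bx⟩ := ht
    have hD : ∀ w, G.Adj u w → G.Adj v w → c s(u, w) ≠ c s(v, w) := by
      intro w h1 h2
      rw [sw u w, sw v w]
      exact proper_adj hc h1.symm h2.symm huv
    have Da := hD a ua va
    have Db := hD b ub vb
    have Dx := hD x ux vx
    have F : ∀ a b d : V, G.Adj a b → G.Adj a d → G.Adj b d → G.Adj u a → G.Adj u b →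
        G.Adj v a → G.Adj v b → (∀ w, G.Adj u w → w = a ∨ w = b ∨ w = d) →
        (∀ w, G.Adj v w → w = a ∨ w = b ∨ w = d) →
        c s(u, a) = c s(b, d) → c s(v, b) = c s(a, d) → False := by
      intro a b d h1 h2 h3 h4 h5 h6 h7 h8 h9 h10 h11
      obtain ⟨p, q, k, hg⟩ := good_four hc hM h1 h2 h3 h4 h5 h6 h7 h8 h9 h10 h11
      exact H p q k hg
    have F1 := F a b x ab ax bx ua ub va vb (by grind) (by grind)
    have F2 := F a x b ax ab bx.symm ua ux va vx (by grind) (by grind)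
    have F3 := F b a x ab.symm bx ax ub ua vb va (by grind) (by grind)
    have F4 := F b x a bx ab.symm ax.symm ub ux vb vx (by grind) (by grind)
    have F5 := F x a b ax.symm bx.symm ab ux ua vx va (by grind) (by grind)
    have F6 := F x b a bx.symm ax.symm ab.symm ux ub vx vb (by grind) (by grind)
    have K1 := kill_adj hc hcr ua ub ux ab ax bx
    have K2 := kill_adj hc hcr va vb vx ab ax bx
    rw [sw x b] at F2
    rw [sw b a] at F4
    rw [sw x a] at F4
    rw [sw x b] at F5
    rw [sw b a, sw x a] at F6
    grind
  · by_cases e1 : c s(u, x) = c s(a, b)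
    · have K := kill_adj hc hcr va vb (t := y)
      by_cases e2 : G.Adj v y → G.Adj a y → G.Adj b y →
          c s(v, y) = c s(a, b) ∨ c s(v, a) = c s(b, y)
      · obtain ⟨p, q, k, hg⟩ := good_one hc hM ab xa xb ya yb hxy hux hvy e1
          (fun _ _ => e2)
        exact H p q k hg
      · obtain ⟨p, q, k, hg⟩ := good_one hc hM ab.symm xb xa yb ya hxy hux' hvy'
          (e1.trans (by rw [sw])) (by
            intro _ _ h1 h2 h3
            have := K h1 ab h3 h2
            rw [sw b a]
            grind)
        exact H p q k hg
    · by_cases e3 : c s(v, y) = c s(a, b)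
      · have K := kill_adj hc hcr ua ub (t := x)
        by_cases e2 : G.Adj u x → G.Adj a x → G.Adj b x →
            c s(u, x) = c s(a, b) ∨ c s(u, a) = c s(b, x)
        · obtain ⟨p, q, k, hg⟩ := good_one hc hM ab ya yb xa xb (Ne.symm hxy) hvy hux e3
            (fun _ _ => e2)
          exact H _ _ k hg.swap
        · obtain ⟨p, q, k, hg⟩ := good_one hc hM ab.symm yb ya xb xa (Ne.symm hxy) hvy' hux'
            (e3.trans (by rw [sw])) (by
              intro _ _ h1 h2 h3
              have := K h1 ab h3 h2
              rw [sw b a]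
              grind)
          exact H _ _ k hg.swap
      · have P' : ∀ u w z, G.Adj u w → G.Adj w z → z ≠ u → c s(u, w) ≠ c s(w, z) := by
          intro u w z h1 h2 h3
          rw [sw u w]
          exact proper_adj hc h1.symm h2 h3.symm
        refine H _ _ (c s(a, b)) (good_two (a := a) (b := b) hc hcr huv ?_ ?_ ?_)
        · intro w hw
          rcases hux w hw with rfl | rfl | rfl
          · exact P' _ _ _ hw ab ub.ne'
          · rw [sw a]
            exact P' _ _ _ hw ab.symm ua.ne'
          · exact e1
        · intro w hw
          rcases hvy w hw with rfl | rfl | rfl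
          · exact P' _ _ _ hw ab vb.ne'
          · rw [sw a]
            exact P' _ _ _ hw ab.symm va.ne'
          · exact e3
        · intro w z h1 h2 h3 h4 h5
          have := h5.ne
          have := hux w h1
          have := hux z h2
          have := hvy w h3
          have := hvy z h4
          have := sw a b
          grind
end

section
/- Fix 0 < α < 1/2 and let G be an n-vertex rainbow K_4-saturated graph with α²n ≥ 7. Then either G has at least (7/2)n − 4αn edges, or G contains a dominating set D with |D| ≤ 2αn satisfying one of the following: (1) every vertex outside D has at least 3 neighbors in D; or (2) every vertex outside D has at least 2 neighbors in D, and there exist adjacent vertices x, y ∈ D such that every vertex outside D is adjacent to both x and y. -/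
open SimpleGraph

lemma pair_transfer {V : Type} (R : V → Prop) {a b a' b' : V} (h : a' ≠ b')
    (h1 : a' = a ∨ a' = b) (h2 : b' = a ∨ b' = b) (r1 : R a') (r2 : R b') : R a ∧ R b := by
  rcases h1 with rfl | rfl <;> rcases h2 with rfl | rfl
  · exact absurd rfl h
  · exact ⟨r1, r2⟩
  · exact ⟨r2, r1⟩
  · exact absurd rfl h

/-- Nonadjacent vertices of a rainbow `K_4`-saturated graph have two common neighbors. -/
lemma common_pair {n : ℕ} (G : SimpleGraph (Fin n))
    (hsat : IsRainbowSat G (⊤ : SimpleGraph (Fin 4))) (u v : Fin n) (huv : u ≠ v)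
    (hadj : ¬ G.Adj u v) :
    ∃ x y, G.Adj x y ∧ G.Adj u x ∧ G.Adj u y ∧ G.Adj v x ∧ G.Adj v y := by
  classical
  obtain ⟨⟨c, hc, hfree⟩, hs⟩ := hsat
  obtain ⟨N, hN⟩ : ∃ N : ℕ, ∀ e, c e < N := by
    refine ⟨Finset.univ.sup c + 1, fun e => ?_⟩
    have := Finset.le_sup (f := c) (Finset.mem_univ e)
    omega
  set G' := G ⊔ SimpleGraph.fromEdgeSet {s(u, v)} with hG'
  have hGe : ∀ e ∈ G'.edgeSet, e ≠ s(u, v) → e ∈ G.edgeSet := by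
    intro e
    induction e with
    | _ a b =>
      intro he hne
      simp only [hG', mem_edgeSet, sup_adj, fromEdgeSet_adj, Set.mem_singleton_iff] at he ⊢
      rcases he with h | h
      · exact h
      · exact absurd h.1 hne
  have key := hs u v huv hadj (Function.update c s(u, v) N) (by
    intro e₁ h₁ e₂ h₂ hne hsh
    by_cases q₁ : e₁ = s(u, v)
    · have q₂ : e₂ ≠ s(u, v) := fun h => hne (q₁.trans h.symm)
      rw [q₁, Function.update_self, Function.update_of_ne q₂]
      exact (hN e₂).ne'
    · by_cases q₂ : e₂ = s(u, v)
      · rw [q₂, Function.update_self, Function.update_of_ne q₁]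
        exact (hN e₁).ne
      · rw [Function.update_of_ne q₁, Function.update_of_ne q₂]
        exact hc e₁ (hGe _ h₁ q₁) e₂ (hGe _ h₂ q₂) hne hsh)
  obtain ⟨f, hf, hfa, hrain⟩ := key
  by_cases hcase : ∃ i j, f i = u ∧ f j = v
  · obtain ⟨i, j, hi, hj⟩ := hcase
    have hij : i ≠ j := by rintro rfl; exact huv (hi.symm.trans hj)
    obtain ⟨k, l, hkl, hki, hkj, hli, hlj⟩ :
        ∃ k l : Fin 4, k ≠ l ∧ k ≠ i ∧ k ≠ j ∧ l ≠ i ∧ l ≠ j := by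
      clear hi hj; revert i j; decide
    have hG : ∀ a b : Fin 4, a ≠ b → b ≠ i → b ≠ j → G.Adj (f a) (f b) := by
      intro a b hab hbi hbj
      have h1 : s(f a, f b) ∈ G'.edgeSet := hfa a b hab
      refine hGe _ h1 ?_
      intro h
      have : f b ∈ s(u, v) := by rw [← h]; simp
      rw [Sym2.mem_iff, ← hi, ← hj] at this
      rcases this with h | h
      · exact hbi (hf h)
      · exact hbj (hf h)
    refine ⟨f k, f l, hG k l hkl hli hlj, ?_, ?_, ?_, ?_⟩
    · rw [← hi]; exact hG i k hki.symm hki hkj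
    · rw [← hi]; exact hG i l hli.symm hli hlj
    · rw [← hj]; exact hG j k hkj.symm hki hkj
    · rw [← hj]; exact hG j l hlj.symm hli hlj
  · exfalso
    have hne : ∀ e : Sym2 (Fin 4), Sym2.map f e ≠ s(u, v) := by
      intro e
      induction e with
      | _ a b =>
        intro h
        rw [Sym2.map_mk, Sym2.eq_iff] at h
        rcases h with h | h
        · exact hcase ⟨a, b, h.1, h.2⟩
        · exact hcase ⟨b, a, h.2, h.1⟩
    apply hfree
    refine ⟨f, hf, fun a b hab => hGe s(f a, f b) (hfa a b hab) (hne s(a, b)), ?_⟩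
    intro e₁ h₁ e₂ h₂ h12
    have := hrain e₁ h₁ e₂ h₂ h12
    rwa [Function.update_of_ne (hne e₁), Function.update_of_ne (hne e₂)] at this

theorem stmt_9 (α : ℝ) (hα0 : 0 < α) (hα : α < 1 / 2) (n : ℕ)
    (hn : 7 ≤ α ^ 2 * (n : ℝ)) (G : SimpleGraph (Fin n))
    (hsat : IsRainbowSat G (⊤ : SimpleGraph (Fin 4))) :
    (7 / 2 * (n : ℝ) - 4 * α * (n : ℝ) ≤ (G.edgeSet.ncard : ℝ)) ∨
    ∃ D : Set (Fin n), (D.ncard : ℝ) ≤ 2 * α * (n : ℝ) ∧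
      ((∀ v ∉ D, 3 ≤ (G.neighborSet v ∩ D).ncard) ∨
       ((∀ v ∉ D, 2 ≤ (G.neighborSet v ∩ D).ncard) ∧
        ∃ x ∈ D, ∃ y ∈ D, G.Adj x y ∧ ∀ v ∉ D, G.Adj v x ∧ G.Adj v y)) := by
  classical
  by_cases hE : 7 / 2 * (n : ℝ) - 4 * α * (n : ℝ) ≤ (G.edgeSet.ncard : ℝ)
  · exact Or.inl hE
  right
  push Not at hE
  have hcp := common_pair G hsat
  have hm : 14 ≤ α * n := by nlinarith
  have hdeg : (∑ v, (G.degree v : ℝ)) < 7 * n - 8 * (α * n) := by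
    have h1 := G.sum_degrees_eq_twice_card_edges
    have h2 : G.edgeSet.ncard = G.edgeFinset.card := by
      rw [← coe_edgeFinset, Set.ncard_coe_finset]
    rw [h2] at hE
    have h3 : (∑ v, (G.degree v : ℝ)) = 2 * (G.edgeFinset.card : ℝ) := by exact_mod_cast h1
    linarith
  -- a vertex of degree at most six
  obtain ⟨v, hv⟩ : ∃ v, G.degree v ≤ 6 := by
    by_contra! h
    have : ∑ v : Fin n, (7 : ℝ) ≤ ∑ v, (G.degree v : ℝ) :=
      Finset.sum_le_sum fun i _ => by exact_mod_cast h i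
    simp at this
    linarith
  -- sets of vertices without light vertices are small
  have hsmall : ∀ X : Finset (Fin n), (∀ x ∈ X, α * n - 7 < G.degree x) →
      (X.card : ℝ) ≤ α * n := by
    intro X hX
    by_contra! hlt
    have h1 : ∑ x ∈ X, (α * n - 7) ≤ ∑ x ∈ X, (G.degree x : ℝ) :=
      Finset.sum_le_sum fun i hi => (hX i hi).le
    have h2 : ∑ x ∈ X, (G.degree x : ℝ) ≤ ∑ x, (G.degree x : ℝ) :=
      Finset.sum_le_sum_of_subset_of_nonneg (Finset.subset_univ _) fun _ _ _ => by positivity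
    simp only [Finset.sum_const, nsmul_eq_mul] at h1
    have h3 : α * n * (α * n - 7) ≤ X.card * (α * n - 7) :=
      mul_le_mul_of_nonneg_right hlt.le (by linarith)
    have h4 : 7 * (n : ℝ) ≤ α * n * (α * n) := by nlinarith
    nlinarith
  let C : Fin n → Finset (Fin n) := fun w => insert w (G.neighborFinset w)
  have hC : ∀ w, (C w).card ≤ G.degree w + 1 := fun w => by
    have := Finset.card_insert_le w (G.neighborFinset w)
    rwa [card_neighborFinset_eq_degree] at this
  have hCm : ∀ w z, z ∈ C w ↔ z = w ∨ G.Adj w z := by simp [C]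
  have hCv : ((C v).card : ℝ) ≤ 7 := by
    have := hC v
    exact_mod_cast (by omega : (C v).card ≤ 7)
  have hnc : ∀ (u : Fin n) (D : Finset (Fin n)),
      (G.neighborSet u ∩ (D : Set (Fin n))).ncard = (G.neighborFinset u ∩ D).card := by
    intro u D
    rw [← Set.ncard_coe_finset, Finset.coe_inter, coe_neighborFinset]
  -- if `u` has at most two neighbors in `D`, any two of them are all of them
  have hpair : ∀ (u : Fin n) (D : Finset (Fin n)), (G.neighborFinset u ∩ D).card < 3 →
      ∀ a b, a ≠ b → G.Adj u a → G.Adj u b → a ∈ D → b ∈ D →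
      ∀ z, G.Adj u z → z ∈ D → z = a ∨ z = b := by
    intro u D hcard a b hab ha hb haD hbD z hz hzD
    by_contra! hne
    have : ({z, a, b} : Finset (Fin n)) ⊆ G.neighborFinset u ∩ D := by
      intro t ht
      simp only [Finset.mem_insert, Finset.mem_singleton] at ht
      rcases ht with rfl | rfl | rfl <;> simp [*]
    have := Finset.card_le_card this
    rw [Finset.card_eq_three.2 ⟨z, a, b, hne.1, hne.2, hab, rfl⟩] at this
    omega
  let P := Finset.univ.filter fun u => u ∉ C v ∧ (G.neighborFinset u ∩ C v).card < 3
  by_cases hP : ∀ p ∈ P, α * n - 7 < G.degree p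
  · refine ⟨((C v ∪ P : Finset (Fin n)) : Set (Fin n)), ?_, Or.inl ?_⟩
    · rw [Set.ncard_coe_finset]
      have h1 : ((C v ∪ P).card : ℝ) ≤ (C v).card + P.card := by
        exact_mod_cast Finset.card_union_le _ _
      linarith [hsmall P hP]
    · intro u hu
      rw [hnc]
      simp only [Finset.mem_coe, Finset.mem_union, P, Finset.mem_filter, Finset.mem_univ,
        true_and, not_or, not_and, not_lt] at hu
      exact (hu.2 hu.1).trans (Finset.card_le_card
        (Finset.inter_subset_inter_left Finset.subset_union_left))
  push Not at hP
  obtain ⟨p, hpP, hpd⟩ := hP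
  simp only [P, Finset.mem_filter, Finset.mem_univ, true_and] at hpP
  obtain ⟨hpv, hp3⟩ := hpP
  have hpv' := hpv
  rw [hCm] at hpv'
  push Not at hpv'
  obtain ⟨x, y, hxy, hpx, hpy, hvx, hvy⟩ := hcp p v hpv'.1 (fun h => hpv'.2 h.symm)
  have hxC : x ∈ C v := (hCm _ _).2 (Or.inr hvx)
  have hyC : y ∈ C v := (hCm _ _).2 (Or.inr hvy)
  let Q := Finset.univ.filter fun q => q ∉ C v ∧ ¬ (G.Adj q x ∧ G.Adj q y)
  by_cases hQ : ∀ q ∈ Q, α * n - 7 < G.degree q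
  · have hall : ∀ w ∉ ((C v ∪ Q : Finset (Fin n)) : Set (Fin n)), G.Adj w x ∧ G.Adj w y := by
      intro w hw
      simp only [Finset.mem_coe, Finset.mem_union, Q, Finset.mem_filter, Finset.mem_univ,
        true_and, not_or, not_and, not_not] at hw
      by_contra h
      exact h (by tauto)
    refine ⟨((C v ∪ Q : Finset (Fin n)) : Set (Fin n)), ?_, Or.inr ⟨?_, x, ?_, y, ?_, hxy, hall⟩⟩
    · rw [Set.ncard_coe_finset]
      have h1 : ((C v ∪ Q).card : ℝ) ≤ (C v).card + Q.card := by
        exact_mod_cast Finset.card_union_le _ _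
      linarith [hsmall Q hQ]
    · intro w hw
      rw [hnc, ← Finset.card_pair hxy.ne]
      apply Finset.card_le_card
      have := hall w hw
      intro t ht
      simp only [Finset.mem_insert, Finset.mem_singleton] at ht
      rcases ht with rfl | rfl <;> simp [*]
    · simp [hxC]
    · simp [hyC]
  push Not at hQ
  obtain ⟨q, hqQ, hqd⟩ := hQ
  simp only [Q, Finset.mem_filter, Finset.mem_univ, true_and] at hqQ
  obtain ⟨hqv, hqxy⟩ := hqQ
  refine ⟨((C v ∪ (C p ∪ C q) : Finset (Fin n)) : Set (Fin n)), ?_, Or.inl ?_⟩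
  · rw [Set.ncard_coe_finset]
    have h1 : ((C v ∪ (C p ∪ C q)).card : ℝ) ≤ (C v).card + ((C p).card + (C q).card) := by
      have a1 := Finset.card_union_le (C v) (C p ∪ C q)
      have a2 := Finset.card_union_le (C p) (C q)
      exact_mod_cast a1.trans (by omega)
    have h2 : ((C p).card : ℝ) ≤ G.degree p + 1 := by exact_mod_cast hC p
    have h3 : ((C q).card : ℝ) ≤ G.degree q + 1 := by exact_mod_cast hC q
    linarith
  · intro u hu
    rw [hnc]
    by_contra! hlt
    set D := C v ∪ (C p ∪ C q) with hD
    have hu' : (u ≠ v ∧ ¬ G.Adj v u) ∧ (u ≠ p ∧ ¬ G.Adj p u) ∧ (u ≠ q ∧ ¬ G.Adj q u) := by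
      simpa [hD, hCm, not_or] using hu
    obtain ⟨⟨hv1, hv2⟩, ⟨hp1, hp2⟩, hq1, hq2⟩ := hu'
    have hDm : ∀ z, z ∈ D ↔ z ∈ C v ∨ z ∈ C p ∨ z ∈ C q := by simp [hD]
    obtain ⟨a, b, hab, hua, hub, hva, hvb⟩ := hcp u v hv1 (fun h => hv2 h.symm)
    obtain ⟨a', b', hab', hua', hub', hpa, hpb⟩ := hcp u p hp1 (fun h => hp2 h.symm)
    obtain ⟨a'', b'', hab'', hua'', hub'', hqa, hqb⟩ := hcp u q hq1 (fun h => hq2 h.symm)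
    have main := hpair u D hlt a b hab.ne hua hub (by simp [hDm, hCm, hva])
      (by simp [hDm, hCm, hvb])
    have m1 := main a' hua' (by simp [hDm, hCm, hpa])
    have m2 := main b' hub' (by simp [hDm, hCm, hpb])
    have m3 := main a'' hua'' (by simp [hDm, hCm, hqa])
    have m4 := main b'' hub'' (by simp [hDm, hCm, hqb])
    have n1 := hab'.ne
    have n2 := hab''.ne
    have hpab : G.Adj p a ∧ G.Adj p b := pair_transfer _ n1 m1 m2 hpa hpb
    have hqab : G.Adj q a ∧ G.Adj q b := pair_transfer _ n2 m3 m4 hqa hqb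
    have main2 := hpair p (C v) hp3 a b hab.ne hpab.1 hpab.2 (by simp [hCm, hva])
      (by simp [hCm, hvb])
    have k1 := main2 x hpx hxC
    have k2 := main2 y hpy hyC
    apply hqxy
    rcases k1 with h1 | h1 <;> rcases k2 with h2 | h2
    · exact absurd (h1.trans h2.symm) hxy.ne
    · rw [h1, h2]; exact hqab
    · rw [h1, h2]; exact hqab.symm
    · exact absurd (h1.trans h2.symm) hxy.ne
end
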